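/- Let d ≥ 1, γ > 1, 1 ≤ p, q < ∞, 0 ≤ s ≤ 1, α ∈ (0, d), and 0 ≤ β₁, β₂ < ∞ be such that β₁p + 2β₂q = 1 and (d − sp)β₁ + (d + α)β₂ = d/γ, and assume β₁γ + β₂γ ≥ 1. Then there exists a constant C > 0 such that for every g ∈ C¹_c(ℝ^d): ‖g‖_{L^γ(ℝ^d)} ≤ C ‖g‖_{Ẇ^{s,p}(ℝ^d)}^{β₁p} ( ∫_{ℝ^d}∫_{ℝ^d} |g(x)|^q |g(y)|^q / |x−y|^{d−α} dx dy )^{β₂}. -/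

import Mathlib

open MeasureTheory Real

/-- Homogeneous (fractional) Sobolev seminorm `‖g‖_{Ẇ^{s,p}(ℝ^d)}`:
for `0 < s < 1` the Gagliardo seminorm, for `s = 1` the `L^p` norm of the gradient,
for `s = 0` the `L^p` norm. -/
noncomputable def sobolevSemi (d : ℕ) (s p : ℝ) (g : EuclideanSpace ℝ (Fin d) → ℝ) : ℝ :=
  if s = 1 then (∫ x, ‖fderiv ℝ g x‖ ^ p) ^ (1 / p)
  else if s = 0 then (∫ x, |g x| ^ p) ^ (1 / p)
  else (∫ x, ∫ y, |g x - g y| ^ p / ‖x - y‖ ^ ((d : ℝ) + s * p)) ^ (1 / p)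

/-- The Coulomb energy `∫∫ |g x|^q |g y|^q / |x-y|^{d-α} dx dy`. -/
noncomputable def coulombEnergy (d : ℕ) (q α : ℝ) (g : EuclideanSpace ℝ (Fin d) → ℝ) : ℝ :=
  ∫ x, ∫ y, |g x| ^ q * |g y| ^ q / ‖x - y‖ ^ ((d : ℝ) - α)

section Auxiliary

open Module Set
open scoped ENNReal NNReal

lemma lintegral_rpow_le_lintegral_rpow {Ω : Type*} [MeasurableSpace Ω] (P : Measure Ω)
    [IsProbabilityMeasure P] {p : ℝ} (hp : 1 ≤ p) {f : Ω → ℝ≥0∞} (hf : AEMeasurable f P) :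
    (∫⁻ x, f x ∂P) ^ p ≤ ∫⁻ x, f x ^ p ∂P := by
  have hp0 : 0 < p := by linarith
  have hinv : 1 / p ≤ 1 := by rw [div_le_one hp0]; exact hp
  have h := ENNReal.lintegral_mul_norm_pow_le (μ := P) (f := fun x => f x ^ p) (g := fun _ => 1)
    (hf.pow_const p) aemeasurable_const (p := 1 / p) (q := 1 - 1 / p) (by positivity)
    (by linarith) (by ring)
  have h2 : ∀ x, (f x ^ p) ^ (1 / p) = f x := fun x => by
    rw [← ENNReal.rpow_mul, mul_one_div_cancel hp0.ne', ENNReal.rpow_one]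
  simp only [h2, ENNReal.one_rpow, mul_one, lintegral_const, measure_univ] at h
  calc (∫⁻ x, f x ∂P) ^ p ≤ ((∫⁻ x, f x ^ p ∂P) ^ (1 / p)) ^ p := by gcongr
    _ = ∫⁻ x, f x ^ p ∂P := by
      rw [← ENNReal.rpow_mul, one_div_mul_cancel hp0.ne', ENNReal.rpow_one]

variable {E : Type*} [NormedAddCommGroup E] [MeasurableSpace E]

/-- The normalized restriction of `μ` to the closed unit ball. -/
noncomputable def unitBallMeasure (μ : Measure E) : Measure E :=
  ProbabilityTheory.cond μ (Metric.closedBall 0 1)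

/-- The Riesz-type potential of `F` with the kernel `(ρ + |x - y|) ^ (-a)`. -/
noncomputable def softRiesz (μ : Measure E) (a : ℝ) (F : E → ℝ≥0∞) (x : E) (ρ : ℝ) : ℝ≥0∞ :=
  ∫⁻ y, F y / ENNReal.ofReal (ρ + ‖x - y‖) ^ a ∂μ

lemma softRiesz_le_softRiesz (μ : Measure E) {a : ℝ} (ha : 0 ≤ a) (F : E → ℝ≥0∞) {x x' : E}
    {ρ ρ' : ℝ} (h : ρ + ‖x - x'‖ ≤ ρ') : softRiesz μ a F x' ρ' ≤ softRiesz μ a F x ρ := by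
  refine lintegral_mono fun y => ?_
  have : ‖x - y‖ ≤ ‖x - x'‖ + ‖x' - y‖ := norm_sub_le_norm_sub_add_norm_sub _ _ _
  exact ENNReal.div_le_div_left
    (ENNReal.rpow_le_rpow (ENNReal.ofReal_le_ofReal (by linarith)) ha) _

variable [NormedSpace ℝ E] [FiniteDimensional ℝ E] [BorelSpace E] (μ : Measure E) [μ.IsAddHaarMeasure]

instance : IsProbabilityMeasure (unitBallMeasure μ) :=
  ProbabilityTheory.cond_isProbabilityMeasure_of_finite
    (Metric.measure_closedBall_pos μ 0 one_pos).ne' (measure_closedBall_lt_top).ne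

lemma lintegral_comp_add_smul {f : E → ℝ≥0∞} (hf : Measurable f) (x : E) {r : ℝ} (hr : 0 < r) :
    ∫⁻ w, f (x + r • w) ∂μ = ENNReal.ofReal r ^ (-(finrank ℝ E : ℝ)) * ∫⁻ y, f y ∂μ := by
  have h1 : ∫⁻ w, f (x + r • w) ∂μ = ∫⁻ z, f (x + z) ∂(μ.map (fun w => r • w)) := by
    rw [lintegral_map (by fun_prop) (by fun_prop)]
  rw [h1, Measure.map_addHaar_smul μ hr.ne', lintegral_smul_measure, lintegral_add_left_eq_self]
  congr 1
  rw [abs_of_nonneg (by positivity), ENNReal.ofReal_inv_of_pos (by positivity),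
    ENNReal.ofReal_pow hr.le, ENNReal.rpow_neg, ENNReal.rpow_natCast]

lemma lintegral_unitBallMeasure_comp_le {f h : E → ℝ≥0∞} (hf : Measurable f) (x : E) {r : ℝ}
    (hr : 0 < r) (hle : ∀ w ∈ Metric.closedBall (0 : E) 1, h w ≤ f (x + r • w)) :
    ∫⁻ w, h w ∂(unitBallMeasure μ) ≤
      (μ (Metric.closedBall 0 1))⁻¹ *
        (ENNReal.ofReal r ^ (-(finrank ℝ E : ℝ)) * ∫⁻ y, f y ∂μ) := by
  rw [unitBallMeasure, ProbabilityTheory.cond, lintegral_smul_measure, smul_eq_mul,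
    ← lintegral_comp_add_smul μ hf x hr]
  refine mul_le_mul_right ?_ _
  calc ∫⁻ w in Metric.closedBall 0 1, h w ∂μ
      ≤ ∫⁻ w in Metric.closedBall 0 1, f (x + r • w) ∂μ :=
        setLIntegral_mono' Metric.isClosed_closedBall.measurableSet hle
    _ ≤ _ := setLIntegral_le_lintegral _ _

lemma lintegral_unitBallMeasure_rpow_le {G : E → ℝ≥0∞} (hG : Measurable G) {γ q a m b : ℝ}
    (hγ : 1 ≤ γ) (hq : 1 ≤ q) (ha : 0 ≤ a) (hm : 0 ≤ m) (hb : 0 ≤ b) (x : E) {r : ℝ}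
    (hr : 0 < r) :
    (∫⁻ w, G (x + r • w) ∂(unitBallMeasure μ)) ^ (m + q * b) ≤
      (((μ (Metric.closedBall 0 1))⁻¹) ^ (m / γ) *
        ((μ (Metric.closedBall 0 1))⁻¹ * 5 ^ a) ^ b) *
      ENNReal.ofReal r ^ (-((finrank ℝ E : ℝ) * (m / γ) + ((finrank ℝ E : ℝ) - a) * b)) *
      ((∫⁻ y, G y ^ γ ∂μ) ^ (m / γ) * softRiesz μ a (fun y => G y ^ q) x (4 * r) ^ b) := by
  set A := ∫⁻ w, G (x + r • w) ∂(unitBallMeasure μ)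
  set c := (μ (Metric.closedBall (0 : E) 1))⁻¹
  set R := ENNReal.ofReal r
  have hR0 : R ≠ 0 := by simpa [R] using hr
  have hRt : R ≠ ∞ := ENNReal.ofReal_ne_top
  set I := ∫⁻ y, G y ^ γ ∂μ
  set W := softRiesz μ a (fun y => G y ^ q) x (4 * r)
  set n : ℝ := ((finrank ℝ E : ℕ) : ℝ)
  have hA1 : A ^ γ ≤ c * (R ^ (-n) * I) :=
    (lintegral_rpow_le_lintegral_rpow _ hγ (by fun_prop)).trans
      (lintegral_unitBallMeasure_comp_le μ (f := fun y => G y ^ γ) (hG.pow_const _) x hr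
        fun w _ => le_rfl)
  have hA2 : A ^ q ≤ c * (R ^ (-n) * ((5 * R) ^ a * W)) := by
    refine (lintegral_rpow_le_lintegral_rpow _ hq (by fun_prop)).trans ?_
    have hfm : Measurable fun y => G y ^ q / ENNReal.ofReal (4 * r + ‖x - y‖) ^ a := by fun_prop
    have : (5 * R) ^ a * W = ∫⁻ y, (5 * R) ^ a *
        (G y ^ q / ENNReal.ofReal (4 * r + ‖x - y‖) ^ a) ∂μ := by
      rw [lintegral_const_mul _ hfm]; rfl
    rw [this]
    refine lintegral_unitBallMeasure_comp_le μ
      (f := fun y => (5 * R) ^ a * (G y ^ q / ENNReal.ofReal (4 * r + ‖x - y‖) ^ a))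
      (by fun_prop) x hr fun w hw => ?_
    have hw' : ‖w‖ ≤ 1 := by simpa using hw
    have h5 : ENNReal.ofReal (4 * r + ‖x - (x + r • w)‖) ≤ 5 * R := by
      have : 5 * R = ENNReal.ofReal (5 * r) := by
        rw [ENNReal.ofReal_mul (by norm_num)]; norm_num [R]
      rw [this]
      apply ENNReal.ofReal_le_ofReal
      rw [sub_add_cancel_left, norm_neg, norm_smul, Real.norm_of_nonneg hr.le]
      nlinarith
    set k := ENNReal.ofReal (4 * r + ‖x - (x + r • w)‖)
    have hk0 : k ≠ 0 := by
      have : 0 < 4 * r + ‖x - (x + r • w)‖ := by positivity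
      simpa [k] using this
    have hka0 : k ^ a ≠ 0 := (ENNReal.rpow_pos (pos_iff_ne_zero.2 hk0) ENNReal.ofReal_ne_top).ne'
    have hkat : k ^ a ≠ ∞ := ENNReal.rpow_ne_top_of_nonneg ha ENNReal.ofReal_ne_top
    calc G (x + r • w) ^ q = k ^ a * (G (x + r • w) ^ q / k ^ a) :=
          (ENNReal.mul_div_cancel hka0 hkat).symm
      _ ≤ _ := by gcongr
  have hγ0 : 0 < γ := by linarith
  have e1 : A ^ m ≤ c ^ (m / γ) * (R ^ (-n * (m / γ)) * I ^ (m / γ)) := by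
    have : A ^ m = (A ^ γ) ^ (m / γ) := by
      rw [← ENNReal.rpow_mul, mul_div_cancel₀ _ hγ0.ne']
    rw [this, ENNReal.rpow_mul, ← ENNReal.mul_rpow_of_nonneg _ _ (by positivity),
      ← ENNReal.mul_rpow_of_nonneg _ _ (by positivity)]
    gcongr
  have e2 : A ^ (q * b) ≤ (c * 5 ^ a) ^ b * (R ^ ((-n + a) * b) * W ^ b) := by
    rw [ENNReal.rpow_mul, ENNReal.rpow_mul, ← ENNReal.mul_rpow_of_nonneg _ _ hb,
      ← ENNReal.mul_rpow_of_nonneg _ _ hb]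
    gcongr
    refine hA2.trans (le_of_eq ?_)
    rw [ENNReal.mul_rpow_of_nonneg _ _ ha, ENNReal.rpow_add _ _ hR0 hRt]
    ring
  rw [ENNReal.rpow_add_of_nonneg _ _ hm (by positivity)]
  refine (mul_le_mul' e1 e2).trans (le_of_eq ?_)
  have : R ^ (-(n * (m / γ) + (n - a) * b)) = R ^ (-n * (m / γ)) * R ^ ((-n + a) * b) := by
    rw [← ENNReal.rpow_add _ _ hR0 hRt]; congr 1; ring
  rw [this]
  ring

lemma lintegral_comp_add_smul_le {R : E → ℝ} (hR : LipschitzWith (1 / 2) R) {v : E}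
    (hv : ‖v‖ ≤ 1) {f : E → ℝ≥0∞} (hf : Measurable f) :
    ∫⁻ x, f (x + R x • v) ∂μ ≤ 2 ^ (finrank ℝ E) * ∫⁻ x, f x ∂μ := by
  have hRc : Continuous R := hR.continuous
  set T : E → E := fun x => x + R x • v with hT
  have hTm : Measurable T := by fun_prop
  have hanti : AntilipschitzWith 2 T := by
    refine AntilipschitzWith.of_le_mul_dist fun x y => ?_
    have h1 : ‖R x - R y‖ ≤ 1 / 2 * ‖x - y‖ := by
      have := hR.dist_le_mul x y
      rwa [dist_eq_norm, dist_eq_norm] at this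
    have h2 : ‖(R x - R y) • v‖ ≤ 1 / 2 * ‖x - y‖ := by
      rw [norm_smul]
      nlinarith [norm_nonneg v, norm_nonneg (R x - R y)]
    have h3 : x - y = (T x - T y) - (R x - R y) • v := by
      simp only [hT, sub_smul]; abel
    have h4 : ‖x - y‖ ≤ ‖T x - T y‖ + ‖(R x - R y) • v‖ := by
      conv_lhs => rw [h3]
      exact norm_sub_le _ _
    rw [dist_eq_norm, dist_eq_norm]
    push_cast
    linarith
  have hmap : μ.map T ≤ (2 ^ (finrank ℝ E) : ℝ≥0∞) • μ := by
    refine Measure.le_iff.2 fun s hs => ?_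
    rw [Measure.map_apply hTm hs, Measure.smul_apply, smul_eq_mul]
    have hH := hanti.hausdorffMeasure_preimage_le (d := (finrank ℝ E : ℝ)) (by positivity) s
    rw [Measure.isAddLeftInvariant_eq_smul μ (Measure.hausdorffMeasure (finrank ℝ E : ℝ)),
      Measure.smul_apply, Measure.smul_apply, ENNReal.smul_def, ENNReal.smul_def, smul_eq_mul,
      smul_eq_mul, mul_left_comm]
    gcongr
    simpa using hH
  calc ∫⁻ x, f (T x) ∂μ = ∫⁻ y, f y ∂(μ.map T) := (lintegral_map hf hTm).symm
    _ ≤ ∫⁻ y, f y ∂((2 ^ (finrank ℝ E) : ℝ≥0∞) • μ) := lintegral_mono' hmap le_rfl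
    _ = _ := by rw [lintegral_smul_measure, smul_eq_mul]

lemma exists_lipschitz_radius {X : Type*} [NormedAddCommGroup X] {N : X → ℝ → ℝ≥0∞}
    (hmono : ∀ x x' ρ ρ', 0 ≤ ρ → ρ + ‖x - x'‖ / 4 ≤ ρ' → N x' ρ' ≤ N x ρ)
    (hpos : ∀ x, N x 1 ≠ 0) (hfin : ∀ x, N x 1 ≠ ∞) {h : ℝ} (hh : 0 < h) {c : ℝ≥0∞}
    (hc0 : c ≠ 0) (hct : c ≠ ∞) :
    ∃ R : X → ℝ, LipschitzWith (1 / 2) R ∧ (∀ x, 0 < R x) ∧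
      (∀ x, N x (R x) ≤ c * ENNReal.ofReal (R x) ^ h) ∧
      ∀ x, c * ENNReal.ofReal (R x) ^ h ≤ 4 ^ h * N x 0 := by
  set S : X → Set ℝ := fun x => {ρ | 0 < ρ ∧ N x ρ ≤ c * ENNReal.ofReal ρ ^ h} with hS
  have hup : ∀ x x' ρ ρ', ρ ∈ S x → ρ + ‖x - x'‖ / 4 ≤ ρ' → ρ' ∈ S x' := by
    rintro x x' ρ ρ' ⟨h0, h1⟩ h2
    have h3 : ρ ≤ ρ' := by linarith [norm_nonneg (x - x')]
    refine ⟨h0.trans_le h3, (hmono x x' ρ ρ' h0.le h2).trans (h1.trans ?_)⟩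
    gcongr
  set y : X → ℝ≥0∞ := fun x => (N x 1 / c) ^ (1 / h) with hy
  have hy0 : ∀ x, y x ≠ 0 := fun x =>
    (ENNReal.rpow_pos (ENNReal.div_pos (hpos x) hct) (ENNReal.div_ne_top (hfin x) hc0)).ne'
  have hyt : ∀ x, y x ≠ ∞ := fun x =>
    ENNReal.rpow_ne_top_of_nonneg (by positivity) (ENNReal.div_ne_top (hfin x) hc0)
  have hyN : ∀ x, N x 1 = c * y x ^ h := fun x => by
    rw [hy, ← ENNReal.rpow_mul, one_div_mul_cancel hh.ne', ENNReal.rpow_one,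
      ENNReal.mul_div_cancel hc0 hct]
  have hne : ∀ x, (S x).Nonempty := fun x => by
    refine ⟨max 1 (y x).toReal, by positivity, ?_⟩
    calc N x (max 1 (y x).toReal) ≤ N x 1 := hmono x x _ _ zero_le_one (by simp)
      _ = c * y x ^ h := hyN x
      _ ≤ _ := by
        gcongr
        exact (ENNReal.le_ofReal_iff_toReal_le (hyt x) (by positivity)).2 (le_max_right _ _)
  have hlow : ∀ x, ∀ ρ ∈ S x, min 1 (y x).toReal ≤ ρ := by
    rintro x ρ ⟨h0, h1⟩
    rcases le_total 1 ρ with h2 | h2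
    · exact (min_le_left _ _).trans h2
    · refine (min_le_right _ _).trans ?_
      have h3 := (hmono x x ρ 1 h0.le (by simpa using h2)).trans h1
      rw [hyN, ENNReal.mul_le_mul_iff_right hc0 hct, ENNReal.rpow_le_rpow_iff hh] at h3
      exact ENNReal.toReal_le_of_le_ofReal h0.le h3
  have hbdd : ∀ x, BddBelow (S x) := fun x => ⟨_, fun ρ hρ => hlow x ρ hρ⟩
  have hr : ∀ x, 0 < sInf (S x) := fun x =>
    (lt_min one_pos (ENNReal.toReal_pos (hy0 x) (hyt x))).trans_le
      (le_csInf (hne x) (hlow x))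
  refine ⟨fun x => 2 * sInf (S x), ?_, fun x => by have := hr x; positivity, fun x => ?_,
    fun x => ?_⟩
  · refine LipschitzWith.of_le_add_mul _ fun x x' => ?_
    have : sInf (S x) - ‖x' - x‖ / 4 ≤ sInf (S x') := by
      refine le_csInf (hne x') fun ρ hρ => ?_
      linarith [csInf_le (hbdd x) (hup x' x ρ _ hρ le_rfl)]
    rw [dist_comm, dist_eq_norm]
    push_cast
    linarith
  · obtain ⟨ρ, hρ, hlt⟩ := exists_lt_of_csInf_lt (hne x)
      (show sInf (S x) < 2 * sInf (S x) by linarith [hr x])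
    exact (hup x x ρ _ hρ (by simpa using hlt.le)).2
  · have hlt : sInf (S x) / 2 < sInf (S x) := by linarith [hr x]
    have hnot : sInf (S x) / 2 ∉ S x := notMem_of_lt_csInf hlt (hbdd x)
    have h1 : c * ENNReal.ofReal (sInf (S x) / 2) ^ h ≤ N x 0 := by
      have : ¬ (N x (sInf (S x) / 2) ≤ c * ENNReal.ofReal (sInf (S x) / 2) ^ h) := fun hcon =>
        hnot ⟨by linarith [hr x], hcon⟩
      refine (not_le.1 this).le.trans (hmono x x 0 _ le_rfl ?_)
      rw [sub_self, norm_zero]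
      linarith [hr x]
    have h2 : ENNReal.ofReal (2 * sInf (S x)) = 4 * ENNReal.ofReal (sInf (S x) / 2) := by
      rw [show 2 * sInf (S x) = 4 * (sInf (S x) / 2) by ring, ENNReal.ofReal_mul (by norm_num)]
      norm_num
    rw [h2, ENNReal.mul_rpow_of_nonneg _ _ hh.le, mul_left_comm]
    gcongr

lemma rpow_lintegral_le_of_pointwise {X : Type*} [MeasurableSpace X] (ν : Measure X)
    {G D V : X → ℝ≥0∞} (hG : Measurable G) (hD : Measurable D) (hV : Measurable V)
    {γ q b₁ b₂ : ℝ} {C : ℝ≥0∞} (hγ : 0 < γ) (hb₁ : 0 < b₁) (hb₂ : 0 ≤ b₂) (hq : 0 ≤ q)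
    (hm : 1 ≤ γ * (b₁ + b₂)) (he : 0 ≤ γ * (b₁ + b₂) - q * b₂)
    (hfin : ∫⁻ x, G x ^ γ ∂ν ≠ ∞)
    (hpt : ∀ x, G x ^ (γ * (b₁ + b₂) - q * b₂) ≤
      C * (D x ^ b₁ * ((∫⁻ x, G x ^ γ ∂ν) ^ ((γ * (b₁ + b₂) - 1) / γ) * V x ^ b₂))) :
    (∫⁻ x, G x ^ γ ∂ν) ^ (1 / γ) ≤
      C * ((∫⁻ x, D x ∂ν) ^ b₁ * (∫⁻ x, V x * G x ^ q ∂ν) ^ b₂) := by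
  set I := ∫⁻ x, G x ^ γ ∂ν
  set σ := b₁ + b₂ with hσ
  have hσ0 : 0 < σ := by linarith
  rcases eq_or_ne I 0 with h0 | h0
  · rw [h0, ENNReal.zero_rpow_of_pos (by positivity)]; exact zero_le
  set J := C * I ^ ((γ * σ - 1) / γ) with hJ
  have key : ∀ x, G x ^ γ ≤ J ^ (1 / σ) * (D x ^ (b₁ / σ) * (V x * G x ^ q) ^ (b₂ / σ)) := by
    intro x
    have h1 : G x ^ (γ * σ) ≤ J * (D x ^ b₁ * (V x * G x ^ q) ^ b₂) := by
      have : γ * σ = (γ * σ - q * b₂) + q * b₂ := by ring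
      rw [this, ENNReal.rpow_add_of_nonneg _ _ he (by positivity),
        ENNReal.mul_rpow_of_nonneg _ _ hb₂, ENNReal.rpow_mul (G x) q]
      refine (mul_le_mul' (hpt x) le_rfl).trans (le_of_eq ?_)
      rw [hJ]; ring
    calc G x ^ γ = (G x ^ (γ * σ)) ^ (1 / σ) := by
          rw [← ENNReal.rpow_mul]; congr 1; field_simp
      _ ≤ (J * (D x ^ b₁ * (V x * G x ^ q) ^ b₂)) ^ (1 / σ) := by gcongr
      _ = _ := by
        rw [ENNReal.mul_rpow_of_nonneg J _ (by positivity),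
          ENNReal.mul_rpow_of_nonneg (D x ^ b₁) _ (by positivity), ← ENNReal.rpow_mul,
          ← ENNReal.rpow_mul]
        congr 3 <;> ring_nf
  have hint : I ≤ J ^ (1 / σ) *
      ((∫⁻ x, D x ∂ν) ^ (b₁ / σ) * (∫⁻ x, V x * G x ^ q ∂ν) ^ (b₂ / σ)) := by
    refine (lintegral_mono key).trans ?_
    rw [lintegral_const_mul _ (by fun_prop)]
    gcongr
    exact ENNReal.lintegral_mul_norm_pow_le (by fun_prop) (by fun_prop) (by positivity)
      (by positivity) (by rw [← add_div, ← hσ, div_self hσ0.ne'])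
  have hpow : I ^ σ ≤ J * ((∫⁻ x, D x ∂ν) ^ b₁ * (∫⁻ x, V x * G x ^ q ∂ν) ^ b₂) := by
    refine (ENNReal.rpow_le_rpow hint hσ0.le).trans (le_of_eq ?_)
    rw [ENNReal.mul_rpow_of_nonneg _ _ hσ0.le, ENNReal.mul_rpow_of_nonneg _ _ hσ0.le,
      ← ENNReal.rpow_mul, ← ENNReal.rpow_mul, ← ENNReal.rpow_mul, one_div_mul_cancel hσ0.ne',
      div_mul_cancel₀ _ hσ0.ne', div_mul_cancel₀ _ hσ0.ne', ENNReal.rpow_one]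
  have hsplit : I ^ σ = I ^ ((γ * σ - 1) / γ) * I ^ (1 / γ) := by
    rw [← ENNReal.rpow_add _ _ h0 hfin]; congr 1; field_simp; ring
  have hm' : 0 ≤ (γ * σ - 1) / γ := div_nonneg (by linarith) hγ.le
  rw [hsplit, hJ, mul_comm C, mul_assoc] at hpow
  exact (ENNReal.mul_le_mul_iff_right
    (ENNReal.rpow_pos (pos_iff_ne_zero.2 h0) hfin).ne'
    (ENNReal.rpow_ne_top_of_nonneg hm' hfin)).1 hpow

lemma exists_annular_cutoff : ∃ (Φ : ℝ → ℝ) (L : ℝ≥0), ContDiff ℝ 1 Φ ∧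
    (∀ u, 1 ≤ |u| → Φ u = 1) ∧ (∀ u, ‖Φ u‖ ≤ 4 * |u|) ∧ (∀ u, ‖deriv Φ u‖ₑ ≤ L) ∧
    ∀ u, deriv Φ u ≠ 0 → |u| ∈ Ioc (1 / 4) 1 := by
  set Φ : ℝ → ℝ := fun u => smoothTransition ((16 * u ^ 2 - 1) / 15) with hΦ
  have hC : ContDiff ℝ 1 Φ :=
    (smoothTransition.contDiff (n := 1)).comp (by fun_prop)
  have h1 : ∀ u, 1 ≤ |u| → Φ u = 1 := fun u hu =>
    smoothTransition.one_of_one_le (by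
      rw [le_div_iff₀ (by norm_num), ← sq_abs]; nlinarith)
  have h0 : ∀ u, |u| ≤ 1 / 4 → Φ u = 0 := fun u hu =>
    smoothTransition.zero_of_nonpos (by
      rw [← sq_abs]
      have : |u| ^ 2 ≤ (1 / 4) ^ 2 := by gcongr
      linarith)
  have hnn : ∀ u, 0 ≤ Φ u := fun u => smoothTransition.nonneg _
  have hle : ∀ u, Φ u ≤ 1 := fun u => smoothTransition.le_one _
  have hd : ∀ u, deriv Φ u ≠ 0 → |u| ∈ Ioc (1 / 4) 1 := by
    intro u hu
    constructor
    · by_contra! hcon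
      refine hu (IsLocalMin.deriv_eq_zero (Filter.Eventually.of_forall fun v => ?_))
      rw [h0 u hcon]; exact hnn v
    · by_contra! hcon
      refine hu (IsLocalMax.deriv_eq_zero (Filter.Eventually.of_forall fun v => ?_))
      rw [h1 u hcon.le]; exact hle v
  have hcd : Continuous (deriv Φ) := hC.continuous_deriv le_rfl
  obtain ⟨L, hL⟩ := (isCompact_Icc (a := (-1 : ℝ)) (b := 1)).exists_bound_of_continuousOn
    hcd.continuousOn
  have hL0 : 0 ≤ L := (norm_nonneg _).trans (hL 0 (by norm_num))
  refine ⟨Φ, L.toNNReal, hC, h1, fun u => ?_, fun u => ?_, hd⟩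
  · rw [Real.norm_of_nonneg (hnn u)]
    rcases le_total |u| (1 / 4) with h | h
    · rw [h0 u h]; positivity
    · linarith [hle u]
  · rw [← ofReal_norm]
    refine ENNReal.ofReal_le_ofReal ?_
    by_cases hu : deriv Φ u = 0
    · rw [hu, norm_zero]; exact hL0
    · exact hL u (abs_le.1 (hd u hu).2)

lemma enorm_sub_le_lintegral_fderiv {F : Type*} [NormedAddCommGroup F] [NormedSpace ℝ F]
    {φ : F → ℝ} (hφ : ContDiff ℝ 1 φ) (x v : F) :
    ‖φ (x + v) - φ x‖ₑ ≤ ∫⁻ θ in Icc (0 : ℝ) 1, ‖fderiv ℝ φ (x + θ • v)‖ₑ * ‖v‖ₑ := by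
  have h := enorm_sub_le_lintegral_deriv_of_contDiffOn_Icc
    (f := fun θ : ℝ => φ (x + θ • v)) (a := 0) (b := 1)
    (hφ.comp (by fun_prop)).contDiffOn zero_le_one
  simp only [one_smul, zero_smul, add_zero] at h
  refine h.trans (lintegral_mono fun θ => ?_)
  have hd : HasDerivAt (fun θ : ℝ => φ (x + θ • v)) (fderiv ℝ φ (x + θ • v) v) θ := by
    have h1 : HasDerivAt (fun θ : ℝ => x + θ • v) v θ := by
      simpa using ((hasDerivAt_id θ).smul_const v).const_add x
    exact ((hφ.differentiable one_ne_zero) _).hasFDerivAt.comp_hasDerivAt θ h1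
  rw [hd.deriv]
  exact ContinuousLinearMap.le_opENorm _ _

instance : IsProbabilityMeasure ((volume : Measure ℝ).restrict (Icc 0 1)) :=
  ⟨by simp⟩

lemma setLIntegral_radius_rpow_le {φ : E → ℝ} (hφ : ContDiff ℝ 1 φ) {R : E → ℝ}
    (hR : LipschitzWith (1 / 2) R) (hRpos : ∀ x, 0 < R x) {p : ℝ} (hp : 1 ≤ p) {Ω : Set E}
    (hΩm : MeasurableSet Ω)
    (hΩ : ∀ x ∈ Ω, 2⁻¹ ≤ ∫⁻ w, ‖φ (x + R x • w) - φ x‖ₑ ∂(unitBallMeasure μ)) :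
    ∫⁻ x in Ω, ENNReal.ofReal (R x) ^ (-p) ∂μ ≤
      2 ^ p * 2 ^ (finrank ℝ E) * ∫⁻ x, ‖fderiv ℝ φ x‖ₑ ^ p ∂μ := by
  set f : E → ℝ≥0∞ := fun x => ‖fderiv ℝ φ x‖ₑ with hf
  have hfc : Continuous f := (hφ.continuous_fderiv one_ne_zero).enorm
  have hRc : Continuous R := hR.continuous
  have hp0 : 0 < p := by linarith
  set P := unitBallMeasure μ
  set Λ := (volume : Measure ℝ).restrict (Icc 0 1)
  have hball : ∀ᵐ w ∂P, ‖w‖ ≤ 1 := by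
    have h := (ProbabilityTheory.ae_cond_mem (μ := μ)
      (Metric.isClosed_closedBall (x := (0 : E)) (ε := 1)).measurableSet)
    filter_upwards [h] with w hw
    simpa using hw
  have hθ : ∀ᵐ θ ∂Λ, θ ∈ Icc (0 : ℝ) 1 := ae_restrict_mem measurableSet_Icc
  have hpt : ∀ x ∈ Ω, ENNReal.ofReal (R x) ^ (-p) ≤
      2 ^ p * ∫⁻ w, ∫⁻ θ, f (x + R x • (θ • w)) ^ p ∂Λ ∂P := by
    intro x hx
    set r := ENNReal.ofReal (R x)
    have hr0 : r ≠ 0 := by simpa [r] using hRpos x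
    have hrt : r ≠ ∞ := ENNReal.ofReal_ne_top
    have h1 : 2⁻¹ ≤ r * ∫⁻ w, ∫⁻ θ, f (x + R x • (θ • w)) ∂Λ ∂P := by
      refine (hΩ x hx).trans ?_
      rw [← lintegral_const_mul' _ _ hrt]
      refine lintegral_mono_ae ?_
      filter_upwards [hball] with w hw
      refine (enorm_sub_le_lintegral_fderiv hφ x (R x • w)).trans ?_
      rw [← lintegral_const_mul' _ _ hrt]
      refine lintegral_mono fun θ => ?_
      have h2 : ‖R x • w‖ₑ ≤ r := by
        rw [← ofReal_norm, norm_smul, Real.norm_of_nonneg (hRpos x).le]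
        exact ENNReal.ofReal_le_ofReal (by nlinarith [hRpos x])
      have h3 : θ • R x • w = R x • θ • w := smul_comm _ _ _
      rw [h3, mul_comm]
      gcongr
    have h2 : (∫⁻ w, ∫⁻ θ, f (x + R x • (θ • w)) ∂Λ ∂P) ^ p ≤
        ∫⁻ w, ∫⁻ θ, f (x + R x • (θ • w)) ^ p ∂Λ ∂P := by
      have hm : Measurable (Function.uncurry fun (w : E) (θ : ℝ) => f (x + R x • (θ • w))) := by
        apply Continuous.measurable
        simp only [Function.uncurry_def]
        fun_prop
      refine (lintegral_rpow_le_lintegral_rpow P hp hm.lintegral_prod_right'.aemeasurable).trans ?_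
      refine lintegral_mono fun w => lintegral_rpow_le_lintegral_rpow Λ hp ?_
      exact (by fun_prop : Continuous _).aemeasurable
    calc r ^ (-p) = 2 ^ p * (r⁻¹ * 2⁻¹) ^ p := by
          rw [ENNReal.mul_rpow_of_nonneg _ _ hp0.le, ENNReal.inv_rpow 2,
            mul_left_comm, ENNReal.mul_inv_cancel (by simp) (by simp), mul_one, ENNReal.rpow_neg,
            ENNReal.inv_rpow]
      _ ≤ 2 ^ p * (r⁻¹ * (r * ∫⁻ w, ∫⁻ θ, f (x + R x • (θ • w)) ∂Λ ∂P)) ^ p := by gcongr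
      _ = 2 ^ p * (∫⁻ w, ∫⁻ θ, f (x + R x • (θ • w)) ∂Λ ∂P) ^ p := by
          rw [ENNReal.inv_mul_cancel_left' (by simp [hr0]) (by simp [hrt])]
      _ ≤ _ := by gcongr
  have hmeas3 : Continuous fun z : (E × E) × ℝ => f (z.1.1 + R z.1.1 • (z.2 • z.1.2)) ^ p := by
    have : Continuous fun z : (E × E) × ℝ => f (z.1.1 + R z.1.1 • (z.2 • z.1.2)) := by fun_prop
    exact ENNReal.continuous_rpow_const.comp this
  have hmeas4 : Measurable
      (Function.uncurry fun x w => ∫⁻ θ, f (x + R x • (θ • w)) ^ p ∂Λ) :=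
    Measurable.lintegral_prod_right' (ν := Λ)
      (f := fun z : (E × E) × ℝ => f (z.1.1 + R z.1.1 • (z.2 • z.1.2)) ^ p) hmeas3.measurable
  calc ∫⁻ x in Ω, ENNReal.ofReal (R x) ^ (-p) ∂μ
      ≤ ∫⁻ x in Ω, 2 ^ p * ∫⁻ w, ∫⁻ θ, f (x + R x • (θ • w)) ^ p ∂Λ ∂P ∂μ :=
        setLIntegral_mono' hΩm hpt
    _ ≤ ∫⁻ x, 2 ^ p * ∫⁻ w, ∫⁻ θ, f (x + R x • (θ • w)) ^ p ∂Λ ∂P ∂μ :=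
        setLIntegral_le_lintegral _ _
    _ = 2 ^ p * ∫⁻ x, ∫⁻ w, ∫⁻ θ, f (x + R x • (θ • w)) ^ p ∂Λ ∂P ∂μ :=
        lintegral_const_mul' _ _ (by simp)
    _ = 2 ^ p * ∫⁻ w, ∫⁻ x, ∫⁻ θ, f (x + R x • (θ • w)) ^ p ∂Λ ∂μ ∂P := by
        congr 1
        exact lintegral_lintegral_swap
          (f := fun x w => ∫⁻ θ, f (x + R x • (θ • w)) ^ p ∂Λ) hmeas4.aemeasurable
    _ = 2 ^ p * ∫⁻ w, ∫⁻ θ, ∫⁻ x, f (x + R x • (θ • w)) ^ p ∂μ ∂Λ ∂P := by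
        congr 1
        refine lintegral_congr fun w => ?_
        have h5 : Continuous fun z : E × ℝ => f (z.1 + R z.1 • (z.2 • w)) := by fun_prop
        exact lintegral_lintegral_swap (f := fun x θ => f (x + R x • (θ • w)) ^ p)
          (h5.measurable.pow_const p).aemeasurable
    _ ≤ 2 ^ p * ∫⁻ w, ∫⁻ θ, 2 ^ (finrank ℝ E) * ∫⁻ x, f x ^ p ∂μ ∂Λ ∂P := by
        refine mul_le_mul_right (lintegral_mono_ae ?_) _
        filter_upwards [hball] with w hw
        refine lintegral_mono_ae ?_
        filter_upwards [hθ] with θ hθ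
        refine lintegral_comp_add_smul_le μ hR (v := θ • w) ?_ (f := fun x => f x ^ p)
          (hfc.measurable.pow_const _)
        rw [norm_smul, Real.norm_of_nonneg hθ.1]
        nlinarith [norm_nonneg w, hθ.1, hθ.2]
    _ = _ := by simp [mul_assoc, hf]


lemma setLIntegral_level_le {Φ : ℝ → ℝ} {L : ℝ≥0} (hΦ : ContDiff ℝ 1 Φ)
    (hΦ1 : ∀ u, 1 ≤ |u| → Φ u = 1) (hΦ2 : ∀ u, ‖Φ u‖ ≤ 4 * |u|) (hΦ3 : ∀ u, ‖deriv Φ u‖ₑ ≤ L)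
    (hΦ4 : ∀ u, deriv Φ u ≠ 0 → |u| ∈ Ioc (1 / 4) 1)
    {g : E → ℝ} (hg : ContDiff ℝ 1 g) {R : E → ℝ}
    (hR : LipschitzWith (1 / 2) R) (hRpos : ∀ x, 0 < R x) {p : ℝ} (hp : 1 ≤ p) {t : ℝ}
    (ht : 0 < t)
    (hA : ∀ x, ∫⁻ w, ‖g (x + R x • w)‖ₑ ∂(unitBallMeasure μ) ≤ ENNReal.ofReal (t / 8)) :
    ∫⁻ x in {x | t ≤ |g x|}, (ENNReal.ofReal t / ENNReal.ofReal (R x)) ^ p ∂μ ≤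
      2 ^ p * 2 ^ (finrank ℝ E) * L ^ p *
        ∫⁻ x in {x | |g x| ∈ Ioc (t / 4) t}, ‖fderiv ℝ g x‖ₑ ^ p ∂μ := by
  have hp0 : 0 ≤ p := by linarith
  have hgc : Continuous g := hg.continuous
  have hgm : Measurable g := hgc.measurable
  set T := ENNReal.ofReal t
  have hT0 : T ≠ 0 := by simpa [T] using ht
  have hTt : T ≠ ∞ := ENNReal.ofReal_ne_top
  set φ : E → ℝ := fun x => Φ (g x / t) with hφdef
  have hφ : ContDiff ℝ 1 φ := hΦ.comp (by fun_prop)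
  have hφc : Continuous φ := hφ.continuous
  have hS : MeasurableSet {x | |g x| ∈ Ioc (t / 4) t} :=
    hgc.abs.measurable measurableSet_Ioc
  have hΩm : MeasurableSet {x | t ≤ |g x|} := hgc.abs.measurable measurableSet_Ici
  have hφ2 : ∀ x, ‖φ x‖ₑ ≤ 4 / T * ‖g x‖ₑ := by
    intro x
    have h := hΦ2 (g x / t)
    rw [abs_div, abs_of_pos ht] at h
    rw [← ofReal_norm, ← ofReal_norm (g x)]
    refine (ENNReal.ofReal_le_ofReal h).trans (le_of_eq ?_)
    rw [ENNReal.ofReal_mul (by norm_num), ENNReal.ofReal_div_of_pos ht, Real.norm_eq_abs]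
    simp [T, div_eq_mul_inv]
    ring
  have hΩ : ∀ x ∈ {x | t ≤ |g x|},
      2⁻¹ ≤ ∫⁻ w, ‖φ (x + R x • w) - φ x‖ₑ ∂(unitBallMeasure μ) := by
    intro x hx
    have hx1 : φ x = 1 := hΦ1 _ (by rw [abs_div, abs_of_pos ht, le_div_iff₀ ht, one_mul]; exact hx)
    have h1 : (1 : ℝ≥0∞) ≤ 2⁻¹ + ∫⁻ w, ‖φ (x + R x • w) - φ x‖ₑ ∂(unitBallMeasure μ) := by
      calc (1 : ℝ≥0∞) = ∫⁻ w, 1 ∂(unitBallMeasure μ) := by simp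
        _ ≤ ∫⁻ w, (4 / T * ‖g (x + R x • w)‖ₑ + ‖φ (x + R x • w) - φ x‖ₑ)
              ∂(unitBallMeasure μ) := by
            refine lintegral_mono fun w => ?_
            refine le_trans ?_ (add_le_add_left (hφ2 _) _)
            calc (1 : ℝ≥0∞) = ‖φ (x + R x • w) - (φ (x + R x • w) - φ x)‖ₑ := by
                  rw [sub_sub_cancel, hx1]; simp
              _ ≤ _ := enorm_sub_le
        _ = 4 / T * (∫⁻ w, ‖g (x + R x • w)‖ₑ ∂(unitBallMeasure μ)) +
              ∫⁻ w, ‖φ (x + R x • w) - φ x‖ₑ ∂(unitBallMeasure μ) := by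
            rw [lintegral_add_left (by fun_prop), lintegral_const_mul _ (by fun_prop)]
        _ ≤ 4 / T * ENNReal.ofReal (t / 8) + _ := by gcongr; exact hA x
        _ = _ := by
            congr 1
            rw [ENNReal.ofReal_div_of_pos (by norm_num), show ENNReal.ofReal 8 = 4 * 2 by norm_num,
              div_eq_mul_inv, div_eq_mul_inv, ENNReal.mul_inv (by simp) (by simp)]
            calc 4 * T⁻¹ * (T * (4⁻¹ * 2⁻¹)) = (4 * 4⁻¹) * (T * T⁻¹) * 2⁻¹ := by ring
              _ = 2⁻¹ := by
                rw [ENNReal.mul_inv_cancel hT0 hTt, ENNReal.mul_inv_cancel (by simp) (by simp)]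
                simp
    have h2 : (2⁻¹ : ℝ≥0∞) + 2⁻¹ ≤ 2⁻¹ + ∫⁻ w, ‖φ (x + R x • w) - φ x‖ₑ ∂(unitBallMeasure μ) := by
      rwa [ENNReal.inv_two_add_inv_two]
    exact (ENNReal.add_le_add_iff_left (by simp)).1 h2
  have hfd : ∀ x, ‖fderiv ℝ φ x‖ₑ ^ p ≤
      (L / T) ^ p * indicator {x | |g x| ∈ Ioc (t / 4) t} (fun x => ‖fderiv ℝ g x‖ₑ ^ p) x := by
    intro x
    have h1 : HasFDerivAt φ (deriv Φ (g x / t) • (t⁻¹ • fderiv ℝ g x)) x := by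
      have e1 : HasFDerivAt (fun y => g y / t) (t⁻¹ • fderiv ℝ g x) x := by
        simpa [div_eq_mul_inv] using
          ((hg.differentiable one_ne_zero) x).hasFDerivAt.mul_const t⁻¹
      exact ((hΦ.differentiable one_ne_zero) _).hasDerivAt.comp_hasFDerivAt x e1
    rw [h1.fderiv]
    by_cases hx : |g x| ∈ Ioc (t / 4) t
    · rw [indicator_of_mem (by exact hx), ← ENNReal.mul_rpow_of_nonneg _ _ hp0]
      refine ENNReal.rpow_le_rpow ?_ hp0
      rw [enorm_smul, enorm_smul, ← mul_assoc, div_eq_mul_inv (L : ℝ≥0∞)]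
      refine mul_le_mul' (mul_le_mul' (hΦ3 _) ?_) le_rfl
      rw [← ofReal_norm, norm_inv, Real.norm_of_nonneg ht.le, ENNReal.ofReal_inv_of_pos ht]
    · have : deriv Φ (g x / t) = 0 := by
        by_contra hcon
        have h := hΦ4 _ hcon
        rw [abs_div, abs_of_pos ht, mem_Ioc, lt_div_iff₀ ht, div_le_iff₀ ht] at h
        exact hx ⟨by linarith [h.1], by linarith [h.2]⟩
      rw [this, zero_smul, ← ofReal_norm, norm_zero, ENNReal.ofReal_zero, ENNReal.zero_rpow_of_pos (by linarith)]
      exact zero_le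
  have hdiv : ∀ x, (T / ENNReal.ofReal (R x)) ^ p = T ^ p * ENNReal.ofReal (R x) ^ (-p) := by
    intro x
    rw [div_eq_mul_inv, ENNReal.mul_rpow_of_nonneg _ _ hp0, ENNReal.rpow_neg, ENNReal.inv_rpow]
  have hTp : T ^ p ≠ ∞ := ENNReal.rpow_ne_top_of_nonneg hp0 hTt
  have hTp0 : T ^ p ≠ 0 := (ENNReal.rpow_pos (pos_iff_ne_zero.2 hT0) hTt).ne'
  simp_rw [hdiv]
  rw [lintegral_const_mul' _ _ hTp]
  calc T ^ p * ∫⁻ x in {x | t ≤ |g x|}, ENNReal.ofReal (R x) ^ (-p) ∂μ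
      ≤ T ^ p * (2 ^ p * 2 ^ (finrank ℝ E) * ∫⁻ x, ‖fderiv ℝ φ x‖ₑ ^ p ∂μ) := by
        gcongr; exact setLIntegral_radius_rpow_le μ hφ hR hRpos hp hΩm hΩ
    _ ≤ T ^ p * (2 ^ p * 2 ^ (finrank ℝ E) * ∫⁻ x, (L / T) ^ p *
          indicator {x | |g x| ∈ Ioc (t / 4) t} (fun x => ‖fderiv ℝ g x‖ₑ ^ p) x ∂μ) := by
        gcongr with x; exact hfd x
    _ = _ := by
        rw [lintegral_const_mul' _ _ (ENNReal.rpow_ne_top_of_nonneg hp0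
          (ENNReal.div_ne_top ENNReal.coe_ne_top hT0)), lintegral_indicator hS,
          ENNReal.div_rpow_of_nonneg _ _ hp0, div_eq_mul_inv]
        calc _ = (T ^ p * (T ^ p)⁻¹) * (2 ^ p * 2 ^ (finrank ℝ E) * L ^ p *
              ∫⁻ x in {x | |g x| ∈ Ioc (t / 4) t}, ‖fderiv ℝ g x‖ₑ ^ p ∂μ) := by ring
          _ = _ := by rw [ENNReal.mul_inv_cancel hTp0 hTp, one_mul]


omit [NormedSpace ℝ E] [FiniteDimensional ℝ E] in
lemma lintegral_enorm_rpow_ne_top {F : Type*} [NormedAddCommGroup F] {f : E → F}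
    (hf : Continuous f) (hfs : HasCompactSupport f) {r : ℝ} (hr : 0 < r) :
    ∫⁻ x, ‖f x‖ₑ ^ r ∂μ ≠ ∞ := by
  have h1 : Integrable (fun x => ‖f x‖ ^ r) μ :=
    (hf.norm.rpow_const fun _ => Or.inr hr.le).integrable_of_hasCompactSupport
      (hfs.norm.comp_left (g := fun u : ℝ => u ^ r) (Real.zero_rpow hr.ne'))
  have h2 := h1.lintegral_lt_top.ne
  convert h2 using 4 with x
  rw [← ENNReal.ofReal_rpow_of_nonneg (norm_nonneg _) hr.le, ofReal_norm]

omit [NormedSpace ℝ E] [FiniteDimensional ℝ E] in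
lemma lintegral_enorm_rpow_ne_zero {g : E → ℝ} (hg : Continuous g) (hg0 : g ≠ 0) {r : ℝ}
    (hr : 0 < r) : ∫⁻ x, ‖g x‖ₑ ^ r ∂μ ≠ 0 := by
  intro h
  rw [lintegral_eq_zero_iff (by fun_prop)] at h
  refine hg0 ((Continuous.ae_eq_iff_eq μ hg continuous_zero).1 ?_)
  filter_upwards [h] with x hx
  simpa [hr, hr.le, not_lt.2 hr.le] using hx

omit [NormedSpace ℝ E] [FiniteDimensional ℝ E] [μ.IsAddHaarMeasure] in
lemma measurable_softRiesz [SecondCountableTopology E] [SFinite μ] {a : ℝ} {F : E → ℝ≥0∞}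
    (hF : Measurable F) (ρ : ℝ) :
    Measurable fun x => softRiesz μ a F x ρ := by
  refine Measurable.lintegral_prod_right'
    (f := fun z : E × E => F z.2 / ENNReal.ofReal (ρ + ‖z.1 - z.2‖) ^ a) ?_
  fun_prop

omit [NormedSpace ℝ E] [FiniteDimensional ℝ E] in
lemma softRiesz_ne_zero {g : E → ℝ} (hg : Continuous g) (hg0 : g ≠ 0) {a q : ℝ} (ha : 0 ≤ a)
    (hq : 0 < q) (x : E) (ρ : ℝ) : softRiesz μ a (fun y => ‖g y‖ₑ ^ q) x ρ ≠ 0 := by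
  intro h
  rw [softRiesz, lintegral_eq_zero_iff (by fun_prop)] at h
  refine lintegral_enorm_rpow_ne_zero μ hg hg0 hq ?_
  rw [lintegral_eq_zero_iff (by fun_prop)]
  filter_upwards [h] with y hy
  rcases ENNReal.div_eq_zero_iff.1 hy with h | h
  · exact h
  · exact absurd h (ENNReal.rpow_ne_top_of_nonneg ha ENNReal.ofReal_ne_top)

omit [NormedSpace ℝ E] [FiniteDimensional ℝ E] in
lemma softRiesz_ne_top {g : E → ℝ} (hg : Continuous g) (hgs : HasCompactSupport g) {a q : ℝ}
    (ha : 0 ≤ a) (hq : 0 < q) (x : E) {ρ : ℝ} (hρ : 0 < ρ) :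
    softRiesz μ a (fun y => ‖g y‖ₑ ^ q) x ρ ≠ ∞ := by
  have h1 : softRiesz μ a (fun y => ‖g y‖ₑ ^ q) x ρ ≤
      ∫⁻ y, ‖g y‖ₑ ^ q * (ENNReal.ofReal ρ ^ a)⁻¹ ∂μ := by
    refine lintegral_mono fun y => ?_
    rw [div_eq_mul_inv]
    gcongr
    linarith [norm_nonneg (x - y)]
  have h2 : (ENNReal.ofReal ρ ^ a)⁻¹ ≠ ∞ := by
    rw [ENNReal.inv_ne_top]
    exact (ENNReal.rpow_pos (by simpa using hρ) ENNReal.ofReal_ne_top).ne'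
  rw [lintegral_mul_const' _ _ h2] at h1
  exact ne_top_of_le_ne_top (ENNReal.mul_ne_top (lintegral_enorm_rpow_ne_top μ hg hgs hq) h2) h1

lemma exists_lintegral_unitBallMeasure_rpow_le {γ q a m b : ℝ} (hγ : 1 ≤ γ) (hq : 1 ≤ q)
    (ha : 0 ≤ a) (hm : 0 ≤ m) (hb : 0 ≤ b) :
    ∃ C : ℝ≥0∞, C ≠ 0 ∧ C ≠ ∞ ∧ ∀ G : E → ℝ≥0∞, Measurable G → ∀ (x : E) (r : ℝ), 0 < r →
      (∫⁻ w, G (x + r • w) ∂(unitBallMeasure μ)) ^ (m + q * b) ≤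
        ENNReal.ofReal r ^ (-((finrank ℝ E : ℝ) * (m / γ) + ((finrank ℝ E : ℝ) - a) * b)) *
        (C * ((∫⁻ y, G y ^ γ ∂μ) ^ (m / γ) * softRiesz μ a (fun y => G y ^ q) x (4 * r) ^ b)) := by
  set v := (μ (Metric.closedBall (0 : E) 1))⁻¹ with hv
  have hv0 : v ≠ 0 := ENNReal.inv_ne_zero.2 measure_closedBall_lt_top.ne
  have hvt : v ≠ ∞ := ENNReal.inv_ne_top.2 (Metric.measure_closedBall_pos μ 0 one_pos).ne'
  have h5t : (5 : ℝ≥0∞) ^ a ≠ ∞ := ENNReal.rpow_ne_top_of_nonneg ha (by simp)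
  have h50 : (5 : ℝ≥0∞) ^ a ≠ 0 := (ENNReal.rpow_pos (by simp) (by simp)).ne'
  have hmγ : 0 ≤ m / γ := by positivity
  refine ⟨v ^ (m / γ) * (v * 5 ^ a) ^ b,
    mul_ne_zero (ENNReal.rpow_pos (pos_iff_ne_zero.2 hv0) hvt).ne'
      (ENNReal.rpow_pos (pos_iff_ne_zero.2 (mul_ne_zero hv0 h50)) (ENNReal.mul_ne_top hvt h5t)).ne',
    ENNReal.mul_ne_top (ENNReal.rpow_ne_top_of_nonneg hmγ hvt)
      (ENNReal.rpow_ne_top_of_nonneg hb (ENNReal.mul_ne_top hvt h5t)), fun G hG x r hr => ?_⟩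
  refine (lintegral_unitBallMeasure_rpow_le μ hG hγ hq ha hm hb x hr).trans (le_of_eq ?_)
  rw [← hv]
  ring

lemma add_mul_pos_of_scaling {n m γ a b q h : ℝ} (hm : 0 ≤ m) (hb : 0 ≤ b) (hq : 0 < q)
    (hh : 0 < h) (hscale : h = n * (m / γ) + (n - a) * b) : 0 < m + q * b := by
  rcases hm.lt_or_eq with hm | rfl
  · positivity
  rcases hb.lt_or_eq with hb | rfl
  · positivity
  simp at hscale
  linarith

/-- A Sobolev–Coulomb inequality with the gradient. -/
lemma exists_rpow_lintegral_le_fderiv {γ p q a b₁ b₂ : ℝ} (hγ : 1 < γ) (hp : 1 ≤ p) (hq : 1 ≤ q)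
    (ha : 0 ≤ a) (hb₁ : 0 < b₁) (hb₂ : 0 ≤ b₂) (hcon : 1 ≤ γ * (b₁ + b₂))
    (h₁ : p * b₁ + 2 * q * b₂ = 1)
    (h₂ : p * b₁ = (finrank ℝ E : ℝ) * ((γ * (b₁ + b₂) - 1) / γ) + ((finrank ℝ E : ℝ) - a) * b₂) :
    ∃ C : ℝ≥0∞, C ≠ ∞ ∧ ∀ g : E → ℝ, ContDiff ℝ 1 g → HasCompactSupport g →
      (∫⁻ x, ‖g x‖ₑ ^ γ ∂μ) ^ (1 / γ) ≤ C * ((∫⁻ x, ‖fderiv ℝ g x‖ₑ ^ p ∂μ) ^ b₁ *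
        (∫⁻ x, softRiesz μ a (fun y => ‖g y‖ₑ ^ q) x 0 * ‖g x‖ₑ ^ q ∂μ) ^ b₂) := by
  obtain ⟨Φ, L, hΦ, hΦ1, hΦ2, hΦ3, hΦ4⟩ := exists_annular_cutoff
  set m := γ * (b₁ + b₂) - 1 with hm
  have hm0 : 0 ≤ m := by linarith
  have hγ0 : 0 < γ := by linarith
  have hp0 : 0 < p := by linarith
  have hq0 : 0 < q := by linarith
  set Θ := m + q * b₂ with hΘ
  set h := p * b₁ with hh
  have hh0 : 0 < h := by positivity
  have hΘ0 : 0 < Θ := add_mul_pos_of_scaling hm0 hb₂ hq0 hh0 h₂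
  set e := h + Θ with he
  have he' : γ * (b₁ + b₂) - q * b₂ = e := by rw [he, hΘ, hm]; linarith
  have hmγ : 0 ≤ m / γ := by positivity
  obtain ⟨C₀, hC₀0, hC₀t, hav₀⟩ := exists_lintegral_unitBallMeasure_rpow_le μ hγ.le hq ha hm0 hb₂
  set K : ℝ≥0∞ := 2 ^ p * 2 ^ (finrank ℝ E) * L ^ p
  have hKt : K ≠ ∞ := ENNReal.mul_ne_top (ENNReal.mul_ne_top
    (ENNReal.rpow_ne_top_of_nonneg hp0.le (by simp)) (by simp))
    (ENNReal.rpow_ne_top_of_nonneg hp0.le ENNReal.coe_ne_top)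
  set C₁ : ℝ≥0∞ := 4 ^ e * 8 ^ Θ * 4 ^ h * C₀
  have hC₁t : C₁ ≠ ∞ := by
    refine ENNReal.mul_ne_top (ENNReal.mul_ne_top (ENNReal.mul_ne_top ?_ ?_) ?_) hC₀t <;>
    exact ENNReal.rpow_ne_top_of_nonneg (by positivity) (by simp)
  refine ⟨C₁ * K ^ b₁, ENNReal.mul_ne_top hC₁t (ENNReal.rpow_ne_top_of_nonneg hb₁.le hKt),
    fun g hg hgs => ?_⟩
  rcases eq_or_ne g 0 with rfl | hg0
  · simp [hγ0]
  have hgc := hg.continuous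
  set I := ∫⁻ x, ‖g x‖ₑ ^ γ ∂μ with hI
  have hI0 : I ≠ 0 := lintegral_enorm_rpow_ne_zero μ hgc hg0 hγ0
  have hIt : I ≠ ∞ := lintegral_enorm_rpow_ne_top μ hgc hgs hγ0
  set W := softRiesz μ a (fun y => ‖g y‖ₑ ^ q) with hW
  set N : E → ℝ → ℝ≥0∞ := fun x ρ => C₀ * (I ^ (m / γ) * W x (4 * ρ) ^ b₂) with hN
  have hmono : ∀ x x' ρ ρ', 0 ≤ ρ → ρ + ‖x - x'‖ / 4 ≤ ρ' → N x' ρ' ≤ N x ρ := by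
    intro x x' ρ ρ' _ hle
    have : W x' (4 * ρ') ≤ W x (4 * ρ) := softRiesz_le_softRiesz μ ha _ (by linarith)
    simp only [hN]
    gcongr
  have hpos : ∀ x, N x 1 ≠ 0 := fun x => mul_ne_zero hC₀0 (mul_ne_zero
    (ENNReal.rpow_pos (pos_iff_ne_zero.2 hI0) hIt).ne'
    (ENNReal.rpow_pos (pos_iff_ne_zero.2 (softRiesz_ne_zero μ hgc hg0 ha hq0 x _))
      (softRiesz_ne_top μ hgc hgs ha hq0 x (by norm_num))).ne')
  have hfin : ∀ x, N x 1 ≠ ∞ := fun x => ENNReal.mul_ne_top hC₀t (ENNReal.mul_ne_top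
    (ENNReal.rpow_ne_top_of_nonneg hmγ hIt) (ENNReal.rpow_ne_top_of_nonneg hb₂
      (softRiesz_ne_top μ hgc hgs ha hq0 x (by norm_num))))
  have hrad : ∀ k : ℤ, ∃ R : E → ℝ, LipschitzWith (1 / 2) R ∧ (∀ x, 0 < R x) ∧
      (∀ x, ∫⁻ w, ‖g (x + R x • w)‖ₑ ∂(unitBallMeasure μ) ≤ ENNReal.ofReal ((4 : ℝ) ^ k / 8)) ∧
      ∀ x, ENNReal.ofReal ((4 : ℝ) ^ k / 8) ^ Θ * ENNReal.ofReal (R x) ^ h ≤ 4 ^ h * N x 0 := by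
    intro k
    have h8 : 0 < ENNReal.ofReal ((4 : ℝ) ^ k / 8) := by
      rw [ENNReal.ofReal_pos]; positivity
    obtain ⟨R, hR1, hR2, hR3, hR4⟩ := exists_lipschitz_radius hmono hpos hfin hh0
      (c := ENNReal.ofReal ((4 : ℝ) ^ k / 8) ^ Θ) (ENNReal.rpow_pos h8 ENNReal.ofReal_ne_top).ne'
      (ENNReal.rpow_ne_top_of_nonneg hΘ0.le ENNReal.ofReal_ne_top)
    refine ⟨R, hR1, hR2, fun x => ?_, hR4⟩
    rw [← ENNReal.rpow_le_rpow_iff hΘ0]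
    have hav := hav₀ (fun x => ‖g x‖ₑ) (by fun_prop) x (R x) (hR2 x)
    rw [← h₂] at hav
    refine hav.trans ?_
    have hr0 : ENNReal.ofReal (R x) ≠ 0 := by simpa using hR2 x
    calc _ = ENNReal.ofReal (R x) ^ (-h) * N x (R x) := rfl
      _ ≤ ENNReal.ofReal (R x) ^ (-h) * (ENNReal.ofReal ((4 : ℝ) ^ k / 8) ^ Θ *
          ENNReal.ofReal (R x) ^ h) := by gcongr; exact hR3 x
      _ = ENNReal.ofReal ((4 : ℝ) ^ k / 8) ^ Θ *
          (ENNReal.ofReal (R x) ^ (-h) * ENNReal.ofReal (R x) ^ h) := by ring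
      _ = _ := by
        rw [← ENNReal.rpow_add _ _ hr0 ENNReal.ofReal_ne_top]; simp
  choose R hR1 hR2 hR3 hR4 using hrad
  have hΩm : ∀ k : ℤ, MeasurableSet {x | (4 : ℝ) ^ k ≤ |g x|} := fun k =>
    hgc.abs.measurable measurableSet_Ici
  set D₀ : ℤ → E → ℝ≥0∞ := fun k => indicator {x | (4 : ℝ) ^ k ≤ |g x|}
    fun x => (ENNReal.ofReal ((4 : ℝ) ^ k) / ENNReal.ofReal (R k x)) ^ p with hD₀
  have hD₀m : ∀ k, Measurable (D₀ k) := fun k => by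
    have := (hR1 k).continuous
    exact Measurable.indicator (by fun_prop) (hΩm k)
  have hD : ∫⁻ x, ∑' k, D₀ k x ∂μ ≤ K * ∫⁻ x, ‖fderiv ℝ g x‖ₑ ^ p ∂μ := by
    rw [lintegral_tsum fun k => (hD₀m k).aemeasurable]
    set S : ℤ → Set E := fun k => {x | |g x| ∈ Ioc ((4 : ℝ) ^ k / 4) (4 ^ k)} with hS
    have hSm : ∀ k, MeasurableSet (S k) := fun k => hgc.abs.measurable measurableSet_Ioc
    have hSd : Pairwise (Function.onFun Disjoint S) := by
      have hmon : Monotone fun k : ℤ => (4 : ℝ) ^ k := fun i j hij =>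
        zpow_le_zpow_right₀ (by norm_num) hij
      have h := hmon.pairwise_disjoint_on_Ioc_pred
      intro i j hij
      have h' := h hij
      simp only [Function.onFun, Order.pred_eq_sub_one, zpow_sub_one₀ (four_ne_zero' ℝ),
        ← div_eq_mul_inv] at h'
      exact Disjoint.preimage (fun x => |g x|) h'
    calc ∑' k, ∫⁻ x, D₀ k x ∂μ ≤ ∑' k, K * ∫⁻ x in S k, ‖fderiv ℝ g x‖ₑ ^ p ∂μ := by
          refine ENNReal.tsum_le_tsum fun k => ?_
          rw [hD₀, lintegral_indicator (hΩm k)]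
          exact setLIntegral_level_le μ hΦ hΦ1 hΦ2 hΦ3 hΦ4 hg (hR1 k) (hR2 k) hp (by positivity)
            (hR3 k)
      _ = K * ∫⁻ x in ⋃ k, S k, ‖fderiv ℝ g x‖ₑ ^ p ∂μ := by
          rw [ENNReal.tsum_mul_left, lintegral_iUnion hSm hSd]
      _ ≤ _ := mul_le_mul_right (setLIntegral_le_lintegral _ _) _
  have hpt : ∀ x, ‖g x‖ₑ ^ (γ * (b₁ + b₂) - q * b₂) ≤
      C₁ * ((∑' k, D₀ k x) ^ b₁ * (I ^ (m / γ) * W x 0 ^ b₂)) := by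
    intro x
    rw [he']
    rcases eq_or_ne (g x) 0 with hx | hx
    · rw [hx, enorm_zero, ENNReal.zero_rpow_of_pos (by positivity)]; exact zero_le
    obtain ⟨k, hk1, hk2⟩ := exists_mem_Ico_zpow (x := |g x|) (y := (4 : ℝ)) (by simpa using hx)
      (by norm_num)
    set T := ENNReal.ofReal ((4 : ℝ) ^ k) with hT
    set r := ENNReal.ofReal (R k x)
    have hT0 : T ≠ 0 := by
      have : (0 : ℝ) < 4 ^ k := by positivity
      simpa [hT] using this
    have hr0 : r ≠ 0 := by simpa [r] using hR2 k x
    have hrt : r ≠ ∞ := ENNReal.ofReal_ne_top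
    have hg4 : ‖g x‖ₑ ≤ 4 * T := by
      rw [zpow_add_one₀ (by norm_num)] at hk2
      rw [← ofReal_norm, hT, show (4 : ℝ≥0∞) = ENNReal.ofReal 4 by norm_num,
        ← ENNReal.ofReal_mul (by norm_num), Real.norm_eq_abs]
      exact ENNReal.ofReal_le_ofReal (by linarith)
    have hTr : (T / r) ^ h ≤ (∑' k, D₀ k x) ^ b₁ := by
      rw [hh, ENNReal.rpow_mul]
      gcongr
      refine le_trans (le_of_eq ?_) (ENNReal.le_tsum k)
      have hxk : x ∈ {x | (4 : ℝ) ^ k ≤ |g x|} := hk1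
      simp only [hD₀]
      rw [indicator_of_mem hxk]
    have hT8 : T ^ Θ * r ^ h ≤ 8 ^ Θ * (4 ^ h * N x 0) := by
      refine le_trans (le_of_eq ?_) (mul_le_mul_right (hR4 k x) _)
      rw [← mul_assoc, ← ENNReal.mul_rpow_of_nonneg _ _ hΘ0.le,
        show (8 : ℝ≥0∞) = ENNReal.ofReal 8 by norm_num, ← ENNReal.ofReal_mul (by norm_num),
        mul_div_cancel₀ _ (by norm_num)]
    have hrh : r ^ (-h) * r ^ h = 1 := by
      rw [← ENNReal.rpow_add _ _ hr0 hrt]; simp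
    calc ‖g x‖ₑ ^ e ≤ (4 * T) ^ e := by gcongr
      _ = 4 ^ e * (T ^ h * r ^ (-h)) * (T ^ Θ * r ^ h) := by
          rw [ENNReal.mul_rpow_of_nonneg _ _ (by positivity), he,
            ENNReal.rpow_add (x := T) _ _ hT0 ENNReal.ofReal_ne_top]
          calc _ = 4 ^ (h + Θ) * (T ^ h * T ^ Θ) * 1 := by ring
            _ = _ := by rw [← hrh]; ring
      _ ≤ 4 ^ e * (∑' k, D₀ k x) ^ b₁ * (8 ^ Θ * (4 ^ h * N x 0)) := by
          gcongr
          rw [ENNReal.rpow_neg, ← ENNReal.inv_rpow, ← ENNReal.mul_rpow_of_nonneg _ _ hh0.le,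
            ← div_eq_mul_inv]
          exact hTr
      _ = _ := by simp only [hN, mul_zero, C₁]; ring
  have hfinal := rpow_lintegral_le_of_pointwise μ (G := fun x => ‖g x‖ₑ)
    (D := fun x => ∑' k, D₀ k x) (V := fun x => W x 0) (by fun_prop)
    (Measurable.tsum hD₀m) (measurable_softRiesz μ (by fun_prop) 0)
    hγ0 hb₁ hb₂ hq0.le hcon (by rw [he']; positivity) hIt hpt
  calc _ ≤ _ := hfinal
    _ ≤ C₁ * ((K * ∫⁻ x, ‖fderiv ℝ g x‖ₑ ^ p ∂μ) ^ b₁ *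
        (∫⁻ x, W x 0 * ‖g x‖ₑ ^ q ∂μ) ^ b₂) := by gcongr
    _ = _ := by rw [ENNReal.mul_rpow_of_nonneg _ _ hb₁.le]; ring

lemma setLIntegral_ball_norm_rpow_ne_top (hn : 0 < finrank ℝ E) {a : ℝ} (han : a < finrank ℝ E) :
    ∫⁻ z in Metric.ball (0 : E) 1, (ENNReal.ofReal ‖z‖ ^ a)⁻¹ ∂μ ≠ ∞ := by
  have : Nontrivial E := Module.nontrivial_of_finrank_pos hn
  have h1 : LocallyIntegrable (fun z : E => ‖z‖ ^ (-a)) μ :=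
    locallyIntegrable_of_norm_le_rpow (C := 1) hn han
      (Filter.Eventually.of_forall fun z => by
        rw [Real.norm_of_nonneg (by positivity), one_mul])
      (measurable_norm.pow_const _).aestronglyMeasurable
  have h2 : IntegrableOn (fun z : E => ‖z‖ ^ (-a)) (Metric.ball 0 1) μ :=
    (h1.integrableOn_isCompact (isCompact_closedBall (0 : E) 1)).mono_set
      Metric.ball_subset_closedBall
  have h3 := h2.lintegral_lt_top.ne
  convert h3 using 1
  refine lintegral_congr_ae (ae_restrict_of_ae ?_)
  have h0 : ∀ᵐ z ∂μ, z ≠ (0 : E) := by simp [ae_iff]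
  filter_upwards [h0] with z hz
  have hz' : 0 < ‖z‖ := norm_pos_iff.2 hz
  rw [← ENNReal.ofReal_rpow_of_pos hz', ENNReal.rpow_neg]

lemma softRiesz_zero_le {a : ℝ} (ha : 0 ≤ a) {F : E → ℝ≥0∞} {M : ℝ≥0∞}
    (hF : Measurable F) (hM : ∀ y, F y ≤ M) (x : E) :
    softRiesz μ a F x 0 ≤
      M * ∫⁻ z in Metric.ball (0 : E) 1, (ENNReal.ofReal ‖z‖ ^ a)⁻¹ ∂μ + ∫⁻ y, F y ∂μ := by
  set k : E → ℝ≥0∞ := (Metric.ball (0 : E) 1).indicator fun z => (ENNReal.ofReal ‖z‖ ^ a)⁻¹ with hk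
  have hkm : Measurable k := Measurable.indicator (by fun_prop) measurableSet_ball
  calc softRiesz μ a F x 0 ≤ ∫⁻ y, (M * k (x - y) + F y) ∂μ := by
        refine lintegral_mono fun y => ?_
        rw [zero_add]
        by_cases hy : x - y ∈ Metric.ball (0 : E) 1
        · rw [hk, indicator_of_mem hy, div_eq_mul_inv]
          exact le_add_right (mul_le_mul_left (hM y) _)
        · refine le_add_left (ENNReal.div_le_of_le_mul ?_)
          have h1 : (1 : ℝ≥0∞) ≤ ENNReal.ofReal ‖x - y‖ :=
            ENNReal.one_le_ofReal.2 (by simpa using hy)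
          refine le_mul_of_one_le_right' ?_
          simpa using ENNReal.rpow_le_rpow h1 ha
    _ = _ := by
        rw [lintegral_add_right _ hF, lintegral_const_mul _ (by fun_prop),
          lintegral_sub_left_eq_self k x, hk, lintegral_indicator measurableSet_ball]

lemma exists_softRiesz_zero_le {g : E → ℝ} (hg : Continuous g) (hgs : HasCompactSupport g)
    {a q : ℝ} (ha : 0 ≤ a) (han : a < finrank ℝ E) (hq : 0 < q) :
    ∃ B : ℝ≥0∞, B ≠ ∞ ∧ ∀ x, softRiesz μ a (fun y => ‖g y‖ₑ ^ q) x 0 ≤ B := by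
  obtain ⟨M, hM⟩ := hgs.exists_bound_of_continuous hg
  refine ⟨_, ENNReal.add_ne_top.2 ⟨ENNReal.mul_ne_top ?_
      (setLIntegral_ball_norm_rpow_ne_top μ (by exact_mod_cast ha.trans_lt han) han),
    lintegral_enorm_rpow_ne_top μ hg hgs hq⟩, fun x => softRiesz_zero_le μ ha (by fun_prop)
      (M := ENNReal.ofReal M ^ q) (fun y => ?_) x⟩
  · exact ENNReal.rpow_ne_top_of_nonneg hq.le ENNReal.ofReal_ne_top
  · rw [← ofReal_norm]
    gcongr
    exact hM y

/-- A Sobolev–Coulomb inequality with the Gagliardo seminorm. -/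
lemma exists_rpow_lintegral_le_gagliardo {γ p q a s b₁ b₂ : ℝ} (hγ : 1 < γ) (hp : 1 ≤ p)
    (hq : 1 ≤ q) (ha : 0 ≤ a) (han : a < finrank ℝ E) (hs : 0 < s) (hb₁ : 0 < b₁) (hb₂ : 0 ≤ b₂)
    (hcon : 1 ≤ γ * (b₁ + b₂)) (h₁ : p * b₁ + 2 * q * b₂ = 1)
    (h₂ : s * p * b₁ =
      (finrank ℝ E : ℝ) * ((γ * (b₁ + b₂) - 1) / γ) + ((finrank ℝ E : ℝ) - a) * b₂) :
    ∃ C : ℝ≥0∞, C ≠ ∞ ∧ ∀ g : E → ℝ, Continuous g → HasCompactSupport g →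
      (∫⁻ x, ‖g x‖ₑ ^ γ ∂μ) ^ (1 / γ) ≤ C * ((∫⁻ x, ∫⁻ y, ‖g x - g y‖ₑ ^ p /
          ENNReal.ofReal ‖x - y‖ ^ ((finrank ℝ E : ℝ) + s * p) ∂μ ∂μ) ^ b₁ *
        (∫⁻ x, softRiesz μ a (fun y => ‖g y‖ₑ ^ q) x 0 * ‖g x‖ₑ ^ q ∂μ) ^ b₂) := by
  set m := γ * (b₁ + b₂) - 1 with hm
  have hm0 : 0 ≤ m := by linarith
  have hγ0 : 0 < γ := by linarith
  have hp0 : 0 < p := by linarith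
  have hq0 : 0 < q := by linarith
  set Θ := m + q * b₂ with hΘ
  set n : ℝ := ((finrank ℝ E : ℕ) : ℝ) with hn
  set h := s * p * b₁ with hh
  have hh0 : 0 < h := by positivity
  have hΘ0 : 0 < Θ := add_mul_pos_of_scaling hm0 hb₂ hq0 hh0 h₂
  set e := p * b₁ + Θ with he
  have he0 : 0 < e := by positivity
  have he' : γ * (b₁ + b₂) - q * b₂ = e := by rw [he, hΘ, hm]; linarith
  have hmγ : 0 ≤ m / γ := by positivity
  have hτ : 0 ≤ n + s * p := by positivity
  obtain ⟨C₀, hC₀0, hC₀t, hav⟩ := exists_lintegral_unitBallMeasure_rpow_le μ hγ.le hq ha hm0 hb₂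
  set v := (μ (Metric.closedBall (0 : E) 1))⁻¹ with hv
  have hvt : v ≠ ∞ := ENNReal.inv_ne_top.2 (Metric.measure_closedBall_pos μ 0 one_pos).ne'
  refine ⟨2 ^ e * v ^ b₁ * C₀, ENNReal.mul_ne_top (ENNReal.mul_ne_top
    (ENNReal.rpow_ne_top_of_nonneg he0.le (by simp)) (ENNReal.rpow_ne_top_of_nonneg hb₁.le hvt))
    hC₀t, fun g hgc hgs => ?_⟩
  rcases eq_or_ne g 0 with rfl | hg0
  · simp [hγ0]
  have hgm : Measurable g := hgc.measurable
  set I := ∫⁻ x, ‖g x‖ₑ ^ γ ∂μ with hI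
  have hI0 : I ≠ 0 := lintegral_enorm_rpow_ne_zero μ hgc hg0 hγ0
  have hIt : I ≠ ∞ := lintegral_enorm_rpow_ne_top μ hgc hgs hγ0
  set W := softRiesz μ a (fun y => ‖g y‖ₑ ^ q) with hW
  have hWt : ∀ x, W x 0 ≠ ∞ := by
    obtain ⟨B, hB, hle⟩ := exists_softRiesz_zero_le μ hgc hgs ha han hq0
    exact fun x => ne_top_of_le_ne_top hB (hle x)
  set D : E → ℝ≥0∞ := fun x => ∫⁻ y, ‖g x - g y‖ₑ ^ p /
          ENNReal.ofReal ‖x - y‖ ^ (n + s * p) ∂μ with hD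
  have hDm : Measurable D := by
    refine Measurable.lintegral_prod_right' (f := fun z : E × E => ‖g z.1 - g z.2‖ₑ ^ p /
      ENNReal.ofReal ‖z.1 - z.2‖ ^ (n + s * p)) ?_
    fun_prop
  have hpt : ∀ x, ‖g x‖ₑ ^ (γ * (b₁ + b₂) - q * b₂) ≤
      2 ^ e * v ^ b₁ * C₀ * (D x ^ b₁ * (I ^ (m / γ) * W x 0 ^ b₂)) := by
    intro x
    rw [he']
    rcases eq_or_ne (g x) 0 with hx | hx
    · rw [hx, enorm_zero, ENNReal.zero_rpow_of_pos he0]; exact zero_le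
    set A := ‖g x‖ₑ / 2 with hA
    have hA0 : A ≠ 0 := by simp [hA, hx]
    have hAt : A ≠ ∞ := ENNReal.div_ne_top enorm_ne_top two_ne_zero
    have hAΘ0 : A ^ Θ ≠ 0 := (ENNReal.rpow_pos (pos_iff_ne_zero.2 hA0) hAt).ne'
    have hAΘt : A ^ Θ ≠ ∞ := ENNReal.rpow_ne_top_of_nonneg hΘ0.le hAt
    set N := C₀ * (I ^ (m / γ) * W x 0 ^ b₂) with hN
    have hN0 : N ≠ 0 := mul_ne_zero hC₀0 (mul_ne_zero
      (ENNReal.rpow_pos (pos_iff_ne_zero.2 hI0) hIt).ne'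
      (ENNReal.rpow_pos (pos_iff_ne_zero.2 (softRiesz_ne_zero μ hgc hg0 ha hq0 x _)) (hWt x)).ne')
    have hNt : N ≠ ∞ := ENNReal.mul_ne_top hC₀t (ENNReal.mul_ne_top
      (ENNReal.rpow_ne_top_of_nonneg hmγ hIt) (ENNReal.rpow_ne_top_of_nonneg hb₂ (hWt x)))
    set R := (N / A ^ Θ) ^ (1 / h) with hR
    have hq0' : N / A ^ Θ ≠ 0 := by simp [ENNReal.div_eq_zero_iff, hN0, hAΘt]
    have hqt : N / A ^ Θ ≠ ∞ := ENNReal.div_ne_top hNt hAΘ0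
    have hRt : R ≠ ∞ := ENNReal.rpow_ne_top_of_nonneg (by positivity) hqt
    have hR0 : R ≠ 0 := (ENNReal.rpow_pos (pos_iff_ne_zero.2 hq0') hqt).ne'
    have hRh : R ^ h * A ^ Θ = N := by
      rw [hR, ← ENNReal.rpow_mul, one_div_mul_cancel hh0.ne', ENNReal.rpow_one,
        ENNReal.div_mul_cancel hAΘ0 hAΘt]
    obtain ⟨r, hr⟩ : ∃ r, r = R.toReal := ⟨_, rfl⟩
    have hr0 : 0 < r := hr ▸ ENNReal.toReal_pos hR0 hRt
    have hrR : ENNReal.ofReal r = R := by rw [hr, ENNReal.ofReal_toReal hRt]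
    have hRinv : R ^ (-h) * R ^ h = 1 := by
      rw [← ENNReal.rpow_add _ _ hR0 hRt]; simp
    have hmean : ∫⁻ w, ‖g (x + r • w)‖ₑ ∂(unitBallMeasure μ) ≤ A := by
      rw [← ENNReal.rpow_le_rpow_iff hΘ0]
      have h3 := hav (fun x => ‖g x‖ₑ) (by fun_prop) x r hr0
      rw [← h₂, hrR] at h3
      calc _ ≤ _ := h3
        _ ≤ R ^ (-h) * N := by
          rw [hN]
          gcongr
          exact softRiesz_le_softRiesz μ ha _ (by simp; exact hr0.le)
        _ = (R ^ (-h) * R ^ h) * A ^ Θ := by rw [← hRh, mul_assoc]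
        _ = A ^ Θ := by rw [hRinv, one_mul]
    have hosc : A ≤ ∫⁻ w, ‖g x - g (x + r • w)‖ₑ ∂(unitBallMeasure μ) := by
      have h4 : A + A ≤ A + ∫⁻ w, ‖g x - g (x + r • w)‖ₑ ∂(unitBallMeasure μ) := by
        calc A + A = ∫⁻ w, ‖g x‖ₑ ∂(unitBallMeasure μ) := by simp [hA, ENNReal.add_halves]
          _ ≤ ∫⁻ w, (‖g (x + r • w)‖ₑ + ‖g x - g (x + r • w)‖ₑ) ∂(unitBallMeasure μ) := by
            refine lintegral_mono fun w => ?_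
            calc ‖g x‖ₑ = ‖g (x + r • w) + (g x - g (x + r • w))‖ₑ := by rw [add_sub_cancel]
              _ ≤ _ := enorm_add_le _ _
          _ = _ := lintegral_add_left (by fun_prop) _
          _ ≤ _ := by gcongr
      exact (ENNReal.add_le_add_iff_left hAt).1 h4
    have hAp : A ^ p ≤ v * (R ^ (s * p) * D x) := by
      set f : E → ℝ≥0∞ := fun y => ‖g x - g y‖ₑ ^ p / ENNReal.ofReal ‖x - y‖ ^ (n + s * p) with hf
      have hfm : Measurable f := by fun_prop
      calc A ^ p ≤ (∫⁻ w, ‖g x - g (x + r • w)‖ₑ ∂(unitBallMeasure μ)) ^ p := by gcongr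
        _ ≤ ∫⁻ w, ‖g x - g (x + r • w)‖ₑ ^ p ∂(unitBallMeasure μ) :=
          lintegral_rpow_le_lintegral_rpow _ hp (by fun_prop)
        _ ≤ v * (ENNReal.ofReal r ^ (-n) * ∫⁻ y, R ^ (n + s * p) * f y ∂μ) := by
          refine lintegral_unitBallMeasure_comp_le μ (f := fun y => R ^ (n + s * p) * f y)
            (by fun_prop) x hr0 fun w hw => ?_
          have hw' : ‖w‖ ≤ 1 := by simpa using hw
          rcases eq_or_ne w 0 with rfl | hw0
          · simp [hp0]
          set k := ENNReal.ofReal ‖x - (x + r • w)‖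
          have hkR : k ≤ R := by
            rw [← hrR]
            apply ENNReal.ofReal_le_ofReal
            rw [sub_add_cancel_left, norm_neg, norm_smul, Real.norm_of_nonneg hr0.le]
            nlinarith
          have hk0 : k ≠ 0 := by
            simp [k, hr0.ne', hw0]
          have hka0 : k ^ (n + s * p) ≠ 0 :=
            (ENNReal.rpow_pos (pos_iff_ne_zero.2 hk0) ENNReal.ofReal_ne_top).ne'
          have hkat : k ^ (n + s * p) ≠ ∞ :=
            ENNReal.rpow_ne_top_of_nonneg hτ ENNReal.ofReal_ne_top
          calc ‖g x - g (x + r • w)‖ₑ ^ p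
              = k ^ (n + s * p) * (‖g x - g (x + r • w)‖ₑ ^ p / k ^ (n + s * p)) :=
                (ENNReal.mul_div_cancel hka0 hkat).symm
            _ ≤ _ := by simp only [hf]; gcongr
        _ = _ := by
          rw [hrR, lintegral_const_mul _ hfm, ← mul_assoc (R ^ (-n)),
            ← ENNReal.rpow_add _ _ hR0 hRt, neg_add_cancel_left]
    calc ‖g x‖ₑ ^ e = (2 * A) ^ e := by
          rw [hA, ENNReal.mul_div_cancel two_ne_zero ENNReal.ofNat_ne_top]
      _ = 2 ^ e * ((A ^ p) ^ b₁ * A ^ Θ) := by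
          rw [ENNReal.mul_rpow_of_nonneg _ _ he0.le, he, ENNReal.rpow_add (x := A) _ _ hA0 hAt,
            ENNReal.rpow_mul]
      _ ≤ 2 ^ e * ((v * (R ^ (s * p) * D x)) ^ b₁ * A ^ Θ) := by gcongr
      _ = 2 ^ e * (v ^ b₁ * D x ^ b₁ * (R ^ h * A ^ Θ)) := by
          rw [ENNReal.mul_rpow_of_nonneg _ _ hb₁.le, ENNReal.mul_rpow_of_nonneg _ _ hb₁.le,
            ← ENNReal.rpow_mul]
          ring
      _ = _ := by rw [hRh, hN]; ring
  exact rpow_lintegral_le_of_pointwise μ (G := fun x => ‖g x‖ₑ)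
    (D := D) (V := fun x => W x 0) (by fun_prop) hDm (measurable_softRiesz μ (by fun_prop) 0)
    hγ0 hb₁ hb₂ hq0.le hcon (by rw [he']; positivity) hIt hpt

lemma setLIntegral_compl_ball_norm_rpow_ne_top {a : ℝ} (hna : finrank ℝ E < a) :
    ∫⁻ z in (Metric.ball (0 : E) 1)ᶜ, (ENNReal.ofReal ‖z‖ ^ a)⁻¹ ∂μ ≠ ∞ := by
  have ha : 0 ≤ a := (Nat.cast_nonneg _).trans hna.le
  have h2 : (2 : ℝ≥0∞) ^ a ≠ ∞ := ENNReal.rpow_ne_top_of_nonneg ha (by simp)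
  have h : ∫⁻ z in (Metric.ball (0 : E) 1)ᶜ, (ENNReal.ofReal ‖z‖ ^ a)⁻¹ ∂μ ≤
      2 ^ a * ∫⁻ z, ENNReal.ofReal ((1 + ‖z‖) ^ (-a)) ∂μ := by
    rw [← lintegral_const_mul' _ _ h2]
    refine le_trans (setLIntegral_mono' measurableSet_ball.compl fun z hz => ?_)
      (setLIntegral_le_lintegral _ _)
    have hz1 : 1 ≤ ‖z‖ := by simpa using hz
    have hle : ENNReal.ofReal (1 + ‖z‖) ≤ 2 * ENNReal.ofReal ‖z‖ := by
      rw [← ENNReal.ofReal_ofNat, ← ENNReal.ofReal_mul (by norm_num)]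
      exact ENNReal.ofReal_le_ofReal (by linarith)
    have hz0 : ENNReal.ofReal ‖z‖ ≠ 0 := by
      rw [Ne, ENNReal.ofReal_eq_zero]; linarith
    rw [← ENNReal.ofReal_rpow_of_pos (by positivity), ENNReal.rpow_neg, ← ENNReal.inv_rpow,
      ← ENNReal.inv_rpow, ← ENNReal.mul_rpow_of_nonneg _ _ ha]
    refine ENNReal.rpow_le_rpow ?_ ha
    calc (ENNReal.ofReal ‖z‖)⁻¹ = 2 * (2 * ENNReal.ofReal ‖z‖)⁻¹ := by
          rw [ENNReal.mul_inv (by simp) (by simp), ← mul_assoc,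
            ENNReal.mul_inv_cancel two_ne_zero ENNReal.ofNat_ne_top, one_mul]
      _ ≤ _ := by gcongr
  exact ne_top_of_le_ne_top (ENNReal.mul_ne_top h2 (finite_integral_one_add_norm hna).ne) h

lemma exists_lintegral_difference_quotient_le (hn : 0 < finrank ℝ E) {g : E → ℝ} {L : ℝ≥0}
    (hL : LipschitzWith L g) {M : ℝ≥0∞} (hMt : M ≠ ∞) (hM : ∀ x, ‖g x‖ₑ ≤ M) {p s : ℝ}
    (hp : 0 < p) (hs0 : 0 < s) (hs1 : s < 1) :
    ∃ B : ℝ≥0∞, B ≠ ∞ ∧ ∀ x, ∫⁻ y, ‖g x - g y‖ₑ ^ p /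
      ENNReal.ofReal ‖x - y‖ ^ ((finrank ℝ E : ℝ) + s * p) ∂μ ≤ B := by
  set τ := (finrank ℝ E : ℝ) + s * p with hτ
  have hsp : 0 < s * p := by positivity
  have hspp : s * p < p := by nlinarith
  set k₁ : E → ℝ≥0∞ := (Metric.ball (0 : E) 1).indicator
    fun z => (ENNReal.ofReal ‖z‖ ^ (τ - p))⁻¹ with hk₁
  set k₂ : E → ℝ≥0∞ := (Metric.ball (0 : E) 1)ᶜ.indicator
    fun z => (ENNReal.ofReal ‖z‖ ^ τ)⁻¹ with hk₂
  have hk₁m : Measurable k₁ := Measurable.indicator (by fun_prop) measurableSet_ball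
  have hk₂m : Measurable k₂ := Measurable.indicator (by fun_prop) measurableSet_ball.compl
  have h₁ : ∫⁻ z, k₁ z ∂μ ≠ ∞ := by
    rw [hk₁, lintegral_indicator measurableSet_ball]
    exact setLIntegral_ball_norm_rpow_ne_top μ hn (by linarith)
  have h₂ : ∫⁻ z, k₂ z ∂μ ≠ ∞ := by
    rw [hk₂, lintegral_indicator measurableSet_ball.compl]
    exact setLIntegral_compl_ball_norm_rpow_ne_top μ (by linarith)
  refine ⟨L ^ p * ∫⁻ z, k₁ z ∂μ + (2 * M) ^ p * ∫⁻ z, k₂ z ∂μ, ENNReal.add_ne_top.2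
    ⟨ENNReal.mul_ne_top (ENNReal.rpow_ne_top_of_nonneg hp.le ENNReal.coe_ne_top) h₁,
      ENNReal.mul_ne_top (ENNReal.rpow_ne_top_of_nonneg hp.le
        (ENNReal.mul_ne_top (by simp) hMt)) h₂⟩, fun x => ?_⟩
  calc _ ≤ ∫⁻ y, (L ^ p * k₁ (x - y) + (2 * M) ^ p * k₂ (x - y)) ∂μ := by
        refine lintegral_mono fun y => ?_
        set k := ENNReal.ofReal ‖x - y‖ with hk
        rcases eq_or_ne x y with hxy | hxy
        · simp [hxy, hp]
        have hk0 : k ≠ 0 := by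
          simpa [hk, sub_eq_zero] using hxy
        have hkt : k ≠ ∞ := ENNReal.ofReal_ne_top
        by_cases hz : x - y ∈ Metric.ball (0 : E) 1
        · refine le_add_right ?_
          rw [hk₁, indicator_of_mem hz, ← hk]
          have h3 : ‖g x - g y‖ₑ ≤ L * k := by
            have := hL x y
            rwa [edist_eq_enorm_sub, edist_eq_enorm_sub, ← ofReal_norm (x - y)] at this
          calc ‖g x - g y‖ₑ ^ p / k ^ τ ≤ (L * k) ^ p / k ^ τ := by gcongr
            _ = _ := by
              rw [ENNReal.mul_rpow_of_nonneg _ _ hp.le, mul_div_assoc, div_eq_mul_inv,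
                ← ENNReal.rpow_neg, ← ENNReal.rpow_neg, ← ENNReal.rpow_add _ _ hk0 hkt]
              congr 2
              ring
        · refine le_add_left ?_
          rw [hk₂, indicator_of_mem (mem_compl hz), ← hk, ← div_eq_mul_inv]
          gcongr
          exact enorm_sub_le.trans (by rw [two_mul]; exact add_le_add (hM x) (hM y))
    _ = _ := by
        rw [lintegral_add_left (by fun_prop), lintegral_const_mul _ (by fun_prop),
          lintegral_const_mul _ (by fun_prop), lintegral_sub_left_eq_self k₁ x,
          lintegral_sub_left_eq_self k₂ x]

lemma lintegral_gagliardo_ne_top (hn : 0 < finrank ℝ E) {g : E → ℝ} (hg : ContDiff ℝ 1 g)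
    (hgs : HasCompactSupport g) {p s : ℝ} (hp : 0 < p) (hs0 : 0 < s) (hs1 : s < 1) :
    ∫⁻ x, ∫⁻ y, ‖g x - g y‖ₑ ^ p /
      ENNReal.ofReal ‖x - y‖ ^ ((finrank ℝ E : ℝ) + s * p) ∂μ ∂μ ≠ ∞ := by
  obtain ⟨L, hL⟩ := ContDiff.lipschitzWith_of_hasCompactSupport hgs hg one_ne_zero
  obtain ⟨M, hM⟩ := hgs.exists_bound_of_continuous hg.continuous
  obtain ⟨B, hB, hle⟩ := exists_lintegral_difference_quotient_le μ hn hL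
    (M := ENNReal.ofReal M) ENNReal.ofReal_ne_top
    (fun x => by rw [← ofReal_norm]; exact ENNReal.ofReal_le_ofReal (hM x)) hp hs0 hs1
  have hgm : Measurable g := hg.continuous.measurable
  set H : E → E → ℝ≥0∞ := fun x y => ‖g x - g y‖ₑ ^ p /
      ENNReal.ofReal ‖x - y‖ ^ ((finrank ℝ E : ℝ) + s * p) with hH
  have hHm : Measurable (Function.uncurry H) := by
    simp only [hH, Function.uncurry_def]; fun_prop
  have hsymm : ∀ x y, H x y = H y x := fun x y => by
    simp only [hH]
    rw [norm_sub_rev, ← neg_sub (g y) (g x), enorm_neg]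
  set S := tsupport g with hS
  have hSm : MeasurableSet S := (isClosed_tsupport g).measurableSet
  have hSt : μ S ≠ ∞ := (IsCompact.measure_lt_top hgs).ne
  set Z : E → E → ℝ≥0∞ := fun x y => S.indicator (fun x => H x y) x with hZ
  have hZm : Measurable (Function.uncurry Z) := by
    have : Function.uncurry Z = (Prod.fst ⁻¹' S).indicator (Function.uncurry H) := by
      ext ⟨x, y⟩
      by_cases hx : x ∈ S <;> simp [hZ, hx, indicator]
    rw [this]
    exact hHm.indicator (measurable_fst hSm)
  have hHZ : ∀ x y, H x y ≤ Z x y + Z y x := by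
    intro x y
    by_cases hx : x ∈ S
    · simp [hZ, hx]
    by_cases hy : y ∈ S
    · simp [hZ, hy, hsymm x y]
    · have hgx : g x = 0 := image_eq_zero_of_notMem_tsupport hx
      have hgy : g y = 0 := image_eq_zero_of_notMem_tsupport hy
      simp [hH, hgx, hgy, hp]
  have hZB : ∫⁻ x, ∫⁻ y, Z x y ∂μ ∂μ ≤ B * μ S := by
    calc ∫⁻ x, ∫⁻ y, Z x y ∂μ ∂μ ≤ ∫⁻ x, S.indicator (fun _ => B) x ∂μ := by
          refine lintegral_mono fun x => ?_
          by_cases hx : x ∈ S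
          · simp only [hZ, indicator_of_mem hx]; exact hle x
          · simp [hZ, hx]
      _ = B * μ S := by rw [lintegral_indicator hSm, setLIntegral_const]
  have hfin : B * μ S + B * μ S ≠ ∞ :=
    ENNReal.add_ne_top.2 ⟨ENNReal.mul_ne_top hB hSt, ENNReal.mul_ne_top hB hSt⟩
  refine ne_top_of_le_ne_top hfin ?_
  calc ∫⁻ x, ∫⁻ y, H x y ∂μ ∂μ ≤ ∫⁻ x, ∫⁻ y, (Z x y + Z y x) ∂μ ∂μ :=
        lintegral_mono fun x => lintegral_mono fun y => hHZ x y
    _ = ∫⁻ x, ((∫⁻ y, Z x y ∂μ) + ∫⁻ y, Z y x ∂μ) ∂μ := by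
        refine lintegral_congr fun x => lintegral_add_left ?_ _
        exact hZm.comp measurable_prodMk_left
    _ = ∫⁻ x, ∫⁻ y, Z x y ∂μ ∂μ + ∫⁻ x, ∫⁻ y, Z y x ∂μ ∂μ :=
        lintegral_add_left (Measurable.lintegral_prod_right' hZm) _
    _ = ∫⁻ x, ∫⁻ y, Z x y ∂μ ∂μ + ∫⁻ y, ∫⁻ x, Z y x ∂μ ∂μ := by
        congr 1
        exact lintegral_lintegral_swap (f := fun x y => Z y x)
          (hZm.comp measurable_swap).aemeasurable
    _ ≤ _ := add_le_add hZB hZB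

lemma integral_integral_eq_toReal {X Y : Type*} [MeasurableSpace X] [MeasurableSpace Y]
    {ξ : Measure X} {ν : Measure Y} {f : X → Y → ℝ} {F : X → Y → ℝ≥0∞}
    (hf : ∀ x, AEStronglyMeasurable (f x) ν) (hnn : ∀ x y, 0 ≤ f x y)
    (hfF : ∀ x, ∀ᵐ y ∂ν, ENNReal.ofReal (f x y) = F x y)
    (hF : AEMeasurable (fun x => ∫⁻ y, F x y ∂ν) ξ) (hfin : ∫⁻ x, ∫⁻ y, F x y ∂ν ∂ξ ≠ ∞) :
    ∫ x, ∫ y, f x y ∂ν ∂ξ = (∫⁻ x, ∫⁻ y, F x y ∂ν ∂ξ).toReal := by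
  rw [← integral_toReal hF (ae_lt_top' hF hfin)]
  congr 1
  ext x
  rw [integral_eq_lintegral_of_nonneg_ae (Filter.Eventually.of_forall (hnn x)) (hf x),
    lintegral_congr_ae (hfF x)]

lemma coulombEnergy_eq_toReal {d : ℕ} (hd : 1 ≤ d) {q α : ℝ} (hq : 0 < q) (hα : 0 < α)
    (hαd : α < d) {g : EuclideanSpace ℝ (Fin d) → ℝ} (hg : Continuous g)
    (hgs : HasCompactSupport g) :
    coulombEnergy d q α g =
      (∫⁻ x, softRiesz volume (d - α) (fun y => ‖g y‖ₑ ^ q) x 0 * ‖g x‖ₑ ^ q).toReal ∧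
    ∫⁻ x, softRiesz volume (d - α) (fun y => ‖g y‖ₑ ^ q) x 0 * ‖g x‖ₑ ^ q ≠ ∞ := by
  have hgm : Measurable g := hg.measurable
  have hn : finrank ℝ (EuclideanSpace ℝ (Fin d)) = d := finrank_euclideanSpace_fin
  have : Nontrivial (EuclideanSpace ℝ (Fin d)) :=
    Module.nontrivial_of_finrank_pos (R := ℝ) (by omega)
  obtain ⟨B, hB, hle⟩ := exists_softRiesz_zero_le volume hg hgs (a := d - α) (by linarith)
    (by rw [hn]; linarith) hq
  have hfin : ∫⁻ x, softRiesz volume (d - α) (fun y => ‖g y‖ₑ ^ q) x 0 * ‖g x‖ₑ ^ q ≠ ∞ := by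
    have h : ∫⁻ x, softRiesz volume (d - α) (fun y => ‖g y‖ₑ ^ q) x 0 * ‖g x‖ₑ ^ q ≤
        ∫⁻ x, B * ‖g x‖ₑ ^ q := by gcongr with x; exact hle x
    rw [lintegral_const_mul' _ _ hB] at h
    exact ne_top_of_le_ne_top
      (ENNReal.mul_ne_top hB (lintegral_enorm_rpow_ne_top volume hg hgs hq)) h
  refine ⟨?_, hfin⟩
  have hin : ∀ x, softRiesz volume (d - α) (fun y => ‖g y‖ₑ ^ q) x 0 * ‖g x‖ₑ ^ q =
      ∫⁻ y, ‖g y‖ₑ ^ q / ENNReal.ofReal (0 + ‖x - y‖) ^ (d - α) * ‖g x‖ₑ ^ q := fun x =>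
    (lintegral_mul_const _ (by fun_prop)).symm
  have hmeas : Measurable fun x =>
      softRiesz volume (d - α) (fun y => ‖g y‖ₑ ^ q) x 0 * ‖g x‖ₑ ^ q :=
    (measurable_softRiesz volume (by fun_prop) 0).mul (by fun_prop)
  simp_rw [hin] at hmeas hfin ⊢
  refine integral_integral_eq_toReal (fun x => ?_) (fun x y => by positivity) (fun x => ?_)
    hmeas.aemeasurable hfin
  · exact (by fun_prop : Measurable _).aestronglyMeasurable
  · have h0 : ∀ᵐ y, y ≠ x := by simp [ae_iff]
    filter_upwards [h0] with y hy
    have hpos : 0 < ‖x - y‖ := norm_pos_iff.2 (sub_ne_zero.2 hy.symm)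
    rw [ENNReal.ofReal_div_of_pos (by positivity), ENNReal.ofReal_mul (by positivity),
      ← ENNReal.ofReal_rpow_of_pos hpos, ← ENNReal.ofReal_rpow_of_nonneg (abs_nonneg _) hq.le,
      ← ENNReal.ofReal_rpow_of_nonneg (abs_nonneg _) hq.le, ← Real.enorm_eq_ofReal_abs,
      ← Real.enorm_eq_ofReal_abs, zero_add, div_eq_mul_inv, div_eq_mul_inv]
    ring

lemma integral_norm_rpow_eq_toReal {X F : Type*} [MeasurableSpace X] [NormedAddCommGroup F]
    {ξ : Measure X} {f : X → F} (hf : AEStronglyMeasurable f ξ) {r : ℝ} (hr : 0 ≤ r) :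
    ∫ x, ‖f x‖ ^ r ∂ξ = (∫⁻ x, ‖f x‖ₑ ^ r ∂ξ).toReal := by
  rw [integral_eq_lintegral_of_nonneg_ae (Filter.Eventually.of_forall fun x => by positivity)
    (hf.norm.aemeasurable.pow_const r).aestronglyMeasurable]
  congr 2
  ext x
  rw [← ENNReal.ofReal_rpow_of_nonneg (norm_nonneg _) hr, ofReal_norm]

lemma integral_gagliardo_eq_toReal {d : ℕ} (hd : 1 ≤ d) {p s : ℝ} (hp : 0 < p) (hs0 : 0 < s)
    (hs1 : s < 1) {g : EuclideanSpace ℝ (Fin d) → ℝ} (hg : ContDiff ℝ 1 g)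
    (hgs : HasCompactSupport g) :
    ∫ x, ∫ y, |g x - g y| ^ p / ‖x - y‖ ^ ((d : ℝ) + s * p) =
      (∫⁻ x, ∫⁻ y, ‖g x - g y‖ₑ ^ p / ENNReal.ofReal ‖x - y‖ ^ ((d : ℝ) + s * p)).toReal := by
  have hgm : Measurable g := hg.continuous.measurable
  have hn : finrank ℝ (EuclideanSpace ℝ (Fin d)) = d := finrank_euclideanSpace_fin
  have : Nontrivial (EuclideanSpace ℝ (Fin d)) :=
    Module.nontrivial_of_finrank_pos (R := ℝ) (by omega)
  have hfin := lintegral_gagliardo_ne_top volume (by omega) hg hgs hp hs0 hs1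
  rw [hn] at hfin
  refine integral_integral_eq_toReal (fun x => ?_) (fun x y => by positivity) (fun x => ?_) ?_ hfin
  · exact (by fun_prop : Measurable _).aestronglyMeasurable
  · have h0 : ∀ᵐ y, y ≠ x := by simp [ae_iff]
    filter_upwards [h0] with y hy
    have hpos : 0 < ‖x - y‖ := norm_pos_iff.2 (sub_ne_zero.2 hy.symm)
    rw [ENNReal.ofReal_div_of_pos (by positivity), ← ENNReal.ofReal_rpow_of_pos hpos,
      ← ENNReal.ofReal_rpow_of_nonneg (abs_nonneg _) hp.le, ← Real.enorm_eq_ofReal_abs]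
  · refine (Measurable.lintegral_prod_right' (f := fun z : EuclideanSpace ℝ (Fin d) ×
      EuclideanSpace ℝ (Fin d) => ‖g z.1 - g z.2‖ₑ ^ p /
      ENNReal.ofReal ‖z.1 - z.2‖ ^ ((d : ℝ) + s * p)) ?_).aemeasurable
    fun_prop

lemma exists_pos_const_of_lintegral_bound {X : Type*} {C : ℝ≥0∞} (hC : C ≠ ∞)
    {P : X → Prop} {I S U : X → ℝ≥0∞} {c b₁ b₂ : ℝ} (hb₁ : 0 ≤ b₁) (hb₂ : 0 ≤ b₂)
    (hS : ∀ g, P g → S g ≠ ∞) (hU : ∀ g, P g → U g ≠ ∞)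
    (h : ∀ g, P g → I g ^ c ≤ C * (S g ^ b₁ * U g ^ b₂)) :
    ∃ K > 0, ∀ g, P g →
      (I g).toReal ^ c ≤ K * (S g).toReal ^ b₁ * (U g).toReal ^ b₂ := by
  refine ⟨C.toReal + 1, by positivity, fun g hg => ?_⟩
  have hS' := ENNReal.rpow_ne_top_of_nonneg hb₁ (hS g hg)
  have hU' := ENNReal.rpow_ne_top_of_nonneg hb₂ (hU g hg)
  have h1 := ENNReal.toReal_mono (ENNReal.mul_ne_top hC (ENNReal.mul_ne_top hS' hU')) (h g hg)
  rw [ENNReal.toReal_mul, ENNReal.toReal_mul, ← ENNReal.toReal_rpow, ← ENNReal.toReal_rpow,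
    ← ENNReal.toReal_rpow, ← mul_assoc] at h1
  refine h1.trans ?_
  gcongr
  linarith

end Auxiliary

theorem stmt0 (d : ℕ) (hd : 1 ≤ d) (γ p q s α β₁ β₂ : ℝ)
    (hγ : 1 < γ) (hp1 : 1 ≤ p) (hq1 : 1 ≤ q) (hs0 : 0 ≤ s) (hs1 : s ≤ 1)
    (hα0 : 0 < α) (hαd : α < d) (hβ₁ : 0 ≤ β₁) (hβ₂ : 0 ≤ β₂)
    (heq1 : β₁ * p + 2 * β₂ * q = 1)
    (heq2 : ((d : ℝ) - s * p) * β₁ + ((d : ℝ) + α) * β₂ = d / γ)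
    (hcon : 1 ≤ β₁ * γ + β₂ * γ) :
    ∃ C > 0, ∀ g : EuclideanSpace ℝ (Fin d) → ℝ,
      ContDiff ℝ 1 g → HasCompactSupport g →
      (∫ x, |g x| ^ γ) ^ (1 / γ) ≤
        C * sobolevSemi d s p g ^ (β₁ * p) * coulombEnergy d q α g ^ β₂ := by
  have hγ0 : 0 < γ := by linarith
  have hp0 : 0 < p := by linarith
  have hq0 : 0 < q := by linarith
  have hd0 : (0 : ℝ) < d := by exact_mod_cast hd
  have hn : Module.finrank ℝ (EuclideanSpace ℝ (Fin d)) = d := finrank_euclideanSpace_fin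
  have heq2' : ((d : ℝ) - s * p) * β₁ * γ + ((d : ℝ) + α) * β₂ * γ = d := by
    rw [eq_div_iff hγ0.ne'] at heq2; linarith
  have hsemi : ∀ X : ℝ, 0 ≤ X → (X ^ (1 / p)) ^ (β₁ * p) = X ^ β₁ := fun X hX => by
    rw [← rpow_mul hX]; congr 1; field_simp
  rcases hs0.eq_or_lt with rfl | hs
  · have h1 : α * (β₂ * γ) ≤ 0 := by nlinarith
    have hβ₂0 : β₂ = 0 := by
      by_contra hne
      have : 0 < β₂ := lt_of_le_of_ne hβ₂ (Ne.symm hne)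
      have : 0 < α * (β₂ * γ) := by positivity
      linarith
    subst hβ₂0
    have h2 : β₁ * γ = 1 := by
      have : (d : ℝ) * (β₁ * γ) = d * 1 := by linarith
      exact mul_left_cancel₀ hd0.ne' this
    have h3 : β₁ * p = 1 := by linarith
    have h4 : p = γ := by
      have hβ : β₁ ≠ 0 := by rintro rfl; simp at h2
      exact mul_left_cancel₀ hβ (h3.trans h2.symm)
    refine ⟨1, one_pos, fun g _ _ => ?_⟩
    rw [h3, h4]
    simp [sobolevSemi]
  have hβ₁0 : 0 < β₁ := by
    refine lt_of_le_of_ne hβ₁ fun h => ?_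
    subst h
    nlinarith
  have hcon' : 1 ≤ γ * (β₁ + β₂) := by linarith
  have hweights : p * β₁ + 2 * q * β₂ = 1 := by linarith
  have hscale : s * p * β₁ = (Module.finrank ℝ (EuclideanSpace ℝ (Fin d)) : ℝ) *
      ((γ * (β₁ + β₂) - 1) / γ) +
      ((Module.finrank ℝ (EuclideanSpace ℝ (Fin d)) : ℝ) - (d - α)) * β₂ := by
    rw [hn]
    field_simp
    linarith
  have hnorm : ∀ g : EuclideanSpace ℝ (Fin d) → ℝ, Continuous g →
      ∫ x, |g x| ^ γ = (∫⁻ x, ‖g x‖ₑ ^ γ).toReal := fun g hg =>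
    integral_norm_rpow_eq_toReal hg.aestronglyMeasurable hγ0.le
  have hU := fun (g : EuclideanSpace ℝ (Fin d) → ℝ) (hg : ContDiff ℝ 1 g ∧ HasCompactSupport g) =>
    coulombEnergy_eq_toReal hd hq0 hα0 hαd hg.1.continuous hg.2
  rcases hs1.eq_or_lt with rfl | hs1
  · obtain ⟨C, hC, hle⟩ := exists_rpow_lintegral_le_fderiv
      (volume : Measure (EuclideanSpace ℝ (Fin d))) hγ hp1 hq1 (a := d - α) (by linarith) hβ₁0 hβ₂
      hcon' hweights (by rw [← hscale]; ring)
    obtain ⟨K, hK, hfin⟩ := exists_pos_const_of_lintegral_bound hC hβ₁ hβ₂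
      (P := fun g : EuclideanSpace ℝ (Fin d) → ℝ => ContDiff ℝ 1 g ∧ HasCompactSupport g)
      (fun g hg => lintegral_enorm_rpow_ne_top volume (hg.1.continuous_fderiv one_ne_zero)
        (hg.2.fderiv ℝ) hp0) (fun g hg => (hU g hg).2) (fun g hg => hle g hg.1 hg.2)
    refine ⟨K, hK, fun g hg hgs => ?_⟩
    have h := hfin g ⟨hg, hgs⟩
    rw [← hnorm g hg.continuous, ← (hU g ⟨hg, hgs⟩).1, ← integral_norm_rpow_eq_toReal
      (hg.continuous_fderiv one_ne_zero).aestronglyMeasurable hp0.le] at h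
    rw [sobolevSemi, if_pos rfl, hsemi _ (integral_nonneg fun x => by positivity)]
    exact h
  · obtain ⟨C, hC, hle⟩ := exists_rpow_lintegral_le_gagliardo
      (volume : Measure (EuclideanSpace ℝ (Fin d))) hγ hp1 hq1 (a := d - α) (by linarith)
      (by rw [hn]; linarith) hs hβ₁0 hβ₂ hcon' hweights hscale
    obtain ⟨K, hK, hfin⟩ := exists_pos_const_of_lintegral_bound hC hβ₁ hβ₂
      (P := fun g : EuclideanSpace ℝ (Fin d) → ℝ => ContDiff ℝ 1 g ∧ HasCompactSupport g)
      (fun g hg => lintegral_gagliardo_ne_top volume (by omega) hg.1 hg.2 hp0 hs hs1)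
      (fun g hg => (hU g hg).2) (fun g hg => hle g hg.1.continuous hg.2)
    refine ⟨K, hK, fun g hg hgs => ?_⟩
    have h := hfin g ⟨hg, hgs⟩
    rw [← hnorm g hg.continuous, ← (hU g ⟨hg, hgs⟩).1, hn,
      ← integral_gagliardo_eq_toReal hd hp0 hs hs1 hg hgs] at h
    rw [sobolevSemi, if_neg hs1.ne, if_neg hs.ne', hsemi _ (integral_nonneg fun x =>
      integral_nonneg fun y => by positivity)]
    exact h
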